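/- arXiv:1812.02198 — 3 statements merged into one kernel-verified Lean document; each statement's English description precedes it below -/
import Mathlib

section
/- Let Φ : ℝ × (−ε, ε) → ℝ² be an orientation-preserving C² diffeomorphism onto a domain Ω, with level-curve family {γ_t}, φ = det(dΦ)/‖γ_t'‖, normal field N, signed curvature κ of the γ_t (with respect to N), and arc-length parameter s along integral curves of N. Suppose u : (−ε, ε) → ℝ is C² with u' > 0, and let U = u ∘ t where t is the second component of Φ⁻¹. Then U is harmonic on Ω if and only if ∂φ/∂s + κ·φ = u''(t)/u'(t) throughout Ω. -/
/-!
Near `Φ q` the function `t` is the second component of a local inverse `g` of `Φ`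
(`exists_local_inverse`, `eventually_t_eq`), so `∇U = (u'(t)/φ) N`, written in the coordinates
`(σ, t)` as `gradU Φ u ∘ g` (`hasGradientAt_comp_t`). The entries of `gradU` are rational in `u'`
and the first derivatives of `Φ`, hence differentiable, and `ΔU` is the trace of
`d(gradU) ∘ (dΦ)⁻¹` (`lap_two`).

The right-hand side is brought to the same coordinates. The pullback `(dΦ)⁻¹ N` is a `C¹` vector
field, so by Picard–Lindelöf an integral curve of `N` passes through every point, and therefore
`∂φ/∂s = dφ((dΦ)⁻¹ N)` (`dφds_eq`). The Frenet equation expresses `κ` through the second derivatives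
of `Φ`. With the symmetry of the second derivatives, an algebraic computation
(`laplacian_identity`) gives
`ΔU = (u'/φ²) (u''/u' − (∂φ/∂s + κ φ))` at every point of `Ω` (`lap_comp_t`).
Since `u'/φ² ≠ 0`, the two sides of the equivalence vanish together, point by point.
-/

open scoped InnerProductSpace

/-- The Laplacian of `f` at `p`. -/
noncomputable def lap {n : ℕ} (f : EuclideanSpace ℝ (Fin n) → ℝ)
    (p : EuclideanSpace ℝ (Fin n)) : ℝ :=
  ∑ i : Fin n,
    ⟪fderiv ℝ (gradient f) p (EuclideanSpace.single i 1), EuclideanSpace.single i (1:ℝ)⟫_ℝ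

/-- `∂Φ/∂σ`, the velocity of the curves `γ_t : σ ↦ Φ(σ, t)`. -/
noncomputable def Phiσ (Φ : ℝ × ℝ → EuclideanSpace ℝ (Fin 2)) (q : ℝ × ℝ) :
    EuclideanSpace ℝ (Fin 2) :=
  fderiv ℝ Φ q (1, 0)

/-- `∂Φ/∂t`. -/
noncomputable def Phit (Φ : ℝ × ℝ → EuclideanSpace ℝ (Fin 2)) (q : ℝ × ℝ) :
    EuclideanSpace ℝ (Fin 2) :=
  fderiv ℝ Φ q (0, 1)

/-- `det dΦ`, the Jacobian determinant of `Φ`. -/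
noncomputable def detJ (Φ : ℝ × ℝ → EuclideanSpace ℝ (Fin 2)) (q : ℝ × ℝ) : ℝ :=
  Phiσ Φ q 0 * Phit Φ q 1 - Phiσ Φ q 1 * Phit Φ q 0

/-- `φ = det dΦ / ‖γ_t'‖`. -/
noncomputable def phiF (Φ : ℝ × ℝ → EuclideanSpace ℝ (Fin 2)) (q : ℝ × ℝ) : ℝ :=
  detJ Φ q / ‖Phiσ Φ q‖

/-- The unit normal field `N = ((−∂y/∂σ) e₁ + (∂x/∂σ) e₂)/‖γ_t'‖`. -/
noncomputable def NF (Φ : ℝ × ℝ → EuclideanSpace ℝ (Fin 2)) (q : ℝ × ℝ) :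
    EuclideanSpace ℝ (Fin 2) :=
  ‖Phiσ Φ q‖⁻¹ •
    (EuclideanSpace.single 0 (-(Phiσ Φ q 1)) + EuclideanSpace.single 1 (Phiσ Φ q 0))

/-- The inverse of `dΦ_q` by Cramer's rule; it is a genuine inverse where `detJ Φ q ≠ 0`. -/
noncomputable def invJ (Φ : ℝ × ℝ → EuclideanSpace ℝ (Fin 2)) (q : ℝ × ℝ) :
    EuclideanSpace ℝ (Fin 2) →L[ℝ] ℝ × ℝ :=
  ContinuousLinearMap.prod
    ((Phit Φ q 1 / detJ Φ q) • (EuclideanSpace.proj 0 : EuclideanSpace ℝ (Fin 2) →L[ℝ] ℝ)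
      - (Phit Φ q 0 / detJ Φ q) • (EuclideanSpace.proj 1 : EuclideanSpace ℝ (Fin 2) →L[ℝ] ℝ))
    ((-Phiσ Φ q 1 / detJ Φ q) • (EuclideanSpace.proj 0 : EuclideanSpace ℝ (Fin 2) →L[ℝ] ℝ)
      + (Phiσ Φ q 0 / detJ Φ q) • (EuclideanSpace.proj 1 : EuclideanSpace ℝ (Fin 2) →L[ℝ] ℝ))

lemma invJ_apply (Φ : ℝ × ℝ → EuclideanSpace ℝ (Fin 2)) (q : ℝ × ℝ)
    (y : EuclideanSpace ℝ (Fin 2)) :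
    invJ Φ q y = (Phit Φ q 1 / detJ Φ q * y 0 - Phit Φ q 0 / detJ Φ q * y 1,
      -Phiσ Φ q 1 / detJ Φ q * y 0 + Phiσ Φ q 0 / detJ Φ q * y 1) := by
  simp [invJ]

lemma fderiv_apply_eq (Φ : ℝ × ℝ → EuclideanSpace ℝ (Fin 2)) (q v : ℝ × ℝ) :
    fderiv ℝ Φ q v = v.1 • Phiσ Φ q + v.2 • Phit Φ q := by
  rw [Phiσ, Phit, ← map_smul, ← map_smul, ← map_add]
  simp

lemma invJ_fderiv (Φ : ℝ × ℝ → EuclideanSpace ℝ (Fin 2)) (q : ℝ × ℝ) (h : detJ Φ q ≠ 0)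
    (v : ℝ × ℝ) : invJ Φ q (fderiv ℝ Φ q v) = v := by
  rw [invJ_apply, fderiv_apply_eq]
  ext
  · simp only [PiLp.add_apply, PiLp.smul_apply, smul_eq_mul]
    field_simp
    rw [detJ]; ring
  · simp only [PiLp.add_apply, PiLp.smul_apply, smul_eq_mul]
    field_simp
    rw [detJ]; ring

lemma fderiv_invJ (Φ : ℝ × ℝ → EuclideanSpace ℝ (Fin 2)) (q : ℝ × ℝ) (h : detJ Φ q ≠ 0)
    (y : EuclideanSpace ℝ (Fin 2)) : fderiv ℝ Φ q (invJ Φ q y) = y := by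
  rw [invJ_apply, fderiv_apply_eq]
  ext i
  fin_cases i
  · simp only [PiLp.add_apply, PiLp.smul_apply, smul_eq_mul, Fin.zero_eta]
    field_simp
    rw [detJ]; ring
  · simp only [PiLp.add_apply, PiLp.smul_apply, smul_eq_mul, Fin.mk_one]
    field_simp
    rw [detJ]; ring

/-- The inverse function theorem; only differentiability of the local inverse at `Φ q` is needed. -/
lemma exists_local_inverse {Φ : ℝ × ℝ → EuclideanSpace ℝ (Fin 2)} {q : ℝ × ℝ}
    (hΦ : ContDiffAt ℝ 2 Φ q) (h : detJ Φ q ≠ 0) :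
    ∃ g : EuclideanSpace ℝ (Fin 2) → ℝ × ℝ, g (Φ q) = q ∧
      (∀ᶠ y in nhds (Φ q), Φ (g y) = y) ∧ HasFDerivAt g (invJ Φ q) (Φ q) := by
  let e : (ℝ × ℝ) ≃L[ℝ] EuclideanSpace ℝ (Fin 2) :=
    ContinuousLinearEquiv.equivOfInverse (fderiv ℝ Φ q) (invJ Φ q)
      (invJ_fderiv Φ q h) (fderiv_invJ Φ q h)
  have hs : HasStrictFDerivAt Φ (e : (ℝ × ℝ) →L[ℝ] EuclideanSpace ℝ (Fin 2)) q :=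
    hΦ.hasStrictFDerivAt two_ne_zero
  exact ⟨hs.localInverse Φ e q, hs.localInverse_apply_image, hs.eventually_right_inverse,
    hs.to_localInverse.hasFDerivAt⟩

/-- `∇(u ∘ t)` in the coordinates `(σ, t)`, that is `(u'(t) / φ) N`. -/
noncomputable def gradU (Φ : ℝ × ℝ → EuclideanSpace ℝ (Fin 2)) (u : ℝ → ℝ) (q : ℝ × ℝ) :
    EuclideanSpace ℝ (Fin 2) :=
  !₂[-(deriv u q.2 * Phiσ Φ q 1) / detJ Φ q, deriv u q.2 * Phiσ Φ q 0 / detJ Φ q]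

/-- Near `Φ q` the function `t` is the second component of a local inverse of `Φ`. -/
lemma eventually_t_eq {S : Set (ℝ × ℝ)} (hS : IsOpen S) {Φ : ℝ × ℝ → EuclideanSpace ℝ (Fin 2)}
    {t : EuclideanSpace ℝ (Fin 2) → ℝ} (ht : ∀ q ∈ S, t (Φ q) = q.2) {q : ℝ × ℝ} (hq : q ∈ S)
    {g : EuclideanSpace ℝ (Fin 2) → ℝ × ℝ} (hg0 : g (Φ q) = q)
    (hg1 : ∀ᶠ y in nhds (Φ q), Φ (g y) = y) (hg2 : ContinuousAt g (Φ q)) :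
    ∀ᶠ y in nhds (Φ q), g y ∈ S ∧ t y = (g y).2 := by
  have : ∀ᶠ y in nhds (Φ q), g y ∈ S :=
    hg2.eventually (by rw [hg0]; exact hS.mem_nhds hq)
  filter_upwards [this, hg1] with y h1 h2
  exact ⟨h1, by rw [← ht _ h1, h2]⟩

lemma hasGradientAt_comp_t {S : Set (ℝ × ℝ)} (hS : IsOpen S)
    {Φ : ℝ × ℝ → EuclideanSpace ℝ (Fin 2)} (hΦ : ContDiffOn ℝ 2 Φ S)
    (hdet : ∀ q ∈ S, 0 < detJ Φ q)
    {t : EuclideanSpace ℝ (Fin 2) → ℝ} (ht : ∀ q ∈ S, t (Φ q) = q.2)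
    {u : ℝ → ℝ} (hu : ContDiff ℝ 2 u) {q : ℝ × ℝ} (hq : q ∈ S) :
    HasGradientAt (fun y => u (t y)) (gradU Φ u q) (Φ q) := by
  obtain ⟨g, hg0, hg1, hg2⟩ := exists_local_inverse (hΦ.contDiffAt (hS.mem_nhds hq))
    (hdet q hq).ne'
  have hte := eventually_t_eq hS ht hq hg0 hg1 hg2.continuousAt
  have hud : HasDerivAt u (deriv u (g (Φ q)).2) (g (Φ q)).2 :=
    (hu.differentiable two_ne_zero _).hasDerivAt
  have h1 : HasFDerivAt (fun y => u (g y).2) _ (Φ q) := hud.comp_hasFDerivAt (Φ q) hg2.snd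
  rw [hasGradientAt_iff_hasFDerivAt]
  refine (h1.congr_of_eventuallyEq (hte.mono fun y hy => ?_)).congr_fderiv ?_
  · simp only [hy.2]
  · ext y
    simp [invJ_apply, gradU, hg0, PiLp.inner_apply, Fin.sum_univ_two]
    ring

lemma contDiffAt_frame {Φ : ℝ × ℝ → EuclideanSpace ℝ (Fin 2)} {q : ℝ × ℝ}
    (hΦ : ContDiffAt ℝ 2 Φ q) : ContDiffAt ℝ 1 (Phiσ Φ) q ∧ ContDiffAt ℝ 1 (Phit Φ) q := by
  have h : ContDiffAt ℝ 1 (fderiv ℝ Φ) q := hΦ.fderiv_right (by norm_num)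
  exact ⟨h.clm_apply contDiffAt_const, h.clm_apply contDiffAt_const⟩

/-- Symmetry of the second derivatives: `∂/∂t (∂Φ/∂σ) = ∂/∂σ (∂Φ/∂t)`. -/
lemma fderiv_Phiσ_eq {Φ : ℝ × ℝ → EuclideanSpace ℝ (Fin 2)} {q : ℝ × ℝ}
    (hΦ : ContDiffAt ℝ 2 Φ q) : fderiv ℝ (Phiσ Φ) q (0, 1) = fderiv ℝ (Phit Φ) q (1, 0) := by
  have h : DifferentiableAt ℝ (fderiv ℝ Φ) q :=
    (hΦ.fderiv_right (m := 1) (by norm_num)).differentiableAt one_ne_zero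
  have h1 := h.hasFDerivAt.clm_apply (hasFDerivAt_const ((1, 0) : ℝ × ℝ) q)
  have h2 := h.hasFDerivAt.clm_apply (hasFDerivAt_const ((0, 1) : ℝ × ℝ) q)
  have hs := (hΦ.isSymmSndFDerivAt (by simp)) (0, 1) (1, 0)
  have e1 : fderiv ℝ (Phiσ Φ) q = _ := h1.fderiv
  have e2 : fderiv ℝ (Phit Φ) q = _ := h2.fderiv
  rw [e1, e2]
  simpa using hs

lemma Phiσ_ne_zero {Φ : ℝ × ℝ → EuclideanSpace ℝ (Fin 2)} {q : ℝ × ℝ} (h : detJ Φ q ≠ 0) :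
    Phiσ Φ q ≠ 0 := by
  intro h0
  simp [detJ, h0] at h

lemma norm_Phiσ_sq (Φ : ℝ × ℝ → EuclideanSpace ℝ (Fin 2)) (q : ℝ × ℝ) :
    ‖Phiσ Φ q‖ ^ 2 = Phiσ Φ q 0 ^ 2 + Phiσ Φ q 1 ^ 2 := by
  simp [EuclideanSpace.norm_sq_eq, Fin.sum_univ_two]

lemma NF_zero (Φ : ℝ × ℝ → EuclideanSpace ℝ (Fin 2)) (q : ℝ × ℝ) :
    NF Φ q 0 = -Phiσ Φ q 1 / ‖Phiσ Φ q‖ := by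
  simp [NF]; ring

lemma NF_one (Φ : ℝ × ℝ → EuclideanSpace ℝ (Fin 2)) (q : ℝ × ℝ) :
    NF Φ q 1 = Phiσ Φ q 0 / ‖Phiσ Φ q‖ := by
  simp [NF]; ring

/-- Picard–Lindelöf for the pullback `(dΦ)⁻¹ N`: a unit-speed integral curve of `N` passes
through every point. Hence the hypothesis on `dφds` determines it as `dφ((dΦ)⁻¹ N)`. -/
lemma dφds_eq {S : Set (ℝ × ℝ)} (hS : IsOpen S)
    {Φ : ℝ × ℝ → EuclideanSpace ℝ (Fin 2)} (hΦ : ContDiffOn ℝ 2 Φ S)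
    (hdet : ∀ q ∈ S, 0 < detJ Φ q) {q : ℝ × ℝ} (hq : q ∈ S) {δ : ℝ}
    (hδ : ∀ β : ℝ → ℝ × ℝ, β 0 = q →
      (∀ᶠ s in nhds 0, β s ∈ S ∧ HasDerivAt (fun τ => Φ (β τ)) (NF Φ (β s)) s) →
      HasDerivAt (fun s => phiF Φ (β s)) δ 0)
    {φ' : ℝ × ℝ →L[ℝ] ℝ} (hφ : HasFDerivAt (phiF Φ) φ' q) :
    δ = φ' (invJ Φ q (NF Φ q)) := by
  have hc : ContDiffAt ℝ 2 Φ q := hΦ.contDiffAt (hS.mem_nhds hq)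
  obtain ⟨hσ, hτ⟩ := contDiffAt_frame hc
  have hD := (hdet q hq).ne'
  have hn := Phiσ_ne_zero hD
  have hσ' := contDiffAt_euclidean.1 hσ
  have hτ' := contDiffAt_euclidean.1 hτ
  have hdJ : ContDiffAt ℝ 1 (detJ Φ) q :=
    ((hσ' 0).mul (hτ' 1)).sub ((hσ' 1).mul (hτ' 0))
  have hnm : ContDiffAt ℝ 1 (fun q => ‖Phiσ Φ q‖) q := hσ.norm ℝ hn
  have hV : ContDiffAt ℝ 1 (fun q => invJ Φ q (NF Φ q)) q := by
    simp only [invJ_apply, NF_zero, NF_one]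
    have hn' := norm_ne_zero_iff.2 hn
    have h0 := (hσ' 1).neg.div hnm hn'
    have h1 := (hσ' 0).div hnm hn'
    exact ((((hτ' 1).div hdJ hD).mul h0).sub (((hτ' 0).div hdJ hD).mul h1)).prodMk
      ((((hσ' 1).neg.div hdJ hD).mul h0).add (((hσ' 0).div hdJ hD).mul h1))
  obtain ⟨β, hβ0, r, hr, hβ⟩ :=
    hV.exists_forall_mem_closedBall_exists_eq_forall_mem_Ioo_hasDerivAt₀ 0
  have hb0 := hβ 0 (by constructor <;> linarith)
  have hSe : ∀ᶠ s in nhds (0 : ℝ), β s ∈ S :=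
    hb0.continuousAt.eventually (by rw [hβ0]; exact hS.mem_nhds hq)
  have h1 := hδ β hβ0 (by
    filter_upwards [hSe, Ioo_mem_nhds (show 0 - r < 0 by linarith) (show 0 < 0 + r by linarith)]
      with s hs hs'
    refine ⟨hs, ?_⟩
    have hf := ((hΦ.contDiffAt (hS.mem_nhds hs)).differentiableAt two_ne_zero).hasFDerivAt
    have := hf.comp_hasDerivAt s (hβ s hs')
    rwa [fderiv_invJ _ _ (hdet _ hs).ne'] at this)
  have hφ' : HasFDerivAt (phiF Φ) φ' (β 0) := by rwa [hβ0]
  have h2 := hφ'.comp_hasDerivAt 0 hb0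
  rw [hβ0] at h2
  exact h1.unique h2

/-- `lap f` is the divergence of the gradient; differentiability of the two components of the
gradient ensures that `fderiv` of the gradient is not a junk value. -/
lemma lap_two {f : EuclideanSpace ℝ (Fin 2) → ℝ} {p : EuclideanSpace ℝ (Fin 2)}
    {L₀ L₁ : EuclideanSpace ℝ (Fin 2) →L[ℝ] ℝ}
    (h₀ : HasFDerivAt (fun y => gradient f y 0) L₀ p)
    (h₁ : HasFDerivAt (fun y => gradient f y 1) L₁ p) :
    lap f p = L₀ (EuclideanSpace.single 0 1) + L₁ (EuclideanSpace.single 1 1) := by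
  have hd : DifferentiableAt ℝ (gradient f) p := by
    rw [differentiableAt_euclidean]
    intro i
    fin_cases i
    · exact h₀.differentiableAt
    · exact h₁.differentiableAt
  have hc : ∀ i : Fin 2, HasFDerivAt (fun y => gradient f y i)
      ((EuclideanSpace.proj i : EuclideanSpace ℝ (Fin 2) →L[ℝ] ℝ).comp
        (fderiv ℝ (gradient f) p)) p := fun i =>
    (EuclideanSpace.proj i : EuclideanSpace ℝ (Fin 2) →L[ℝ] ℝ).hasFDerivAt.comp p hd.hasFDerivAt
  rw [h₀.unique (hc 0), h₁.unique (hc 1), lap, Fin.sum_univ_two]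
  simp [EuclideanSpace.inner_single_right]

lemma hasFDerivAt_quot {E : Type*} [NormedAddCommGroup E] [NormedSpace ℝ E] {f g : E → ℝ}
    {f' g' : E →L[ℝ] ℝ} {x : E} (hf : HasFDerivAt f f' x) (hg : HasFDerivAt g g' x)
    (hx : g x ≠ 0) :
    HasFDerivAt (fun y => f y / g y) ((g x)⁻¹ • f' - (f x / g x ^ 2) • g') x := by
  have h := hf.mul ((hasDerivAt_inv hx).comp_hasFDerivAt x hg)
  simp only [div_eq_mul_inv]
  refine h.congr_fderiv ?_
  ext v
  simp
  ring

/-- The algebra behind `lap_comp_t`. Here `a, b, c, d` are `x_σ, y_σ, x_t, y_t`, the letters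
`as`, `at'`, …, `dt` are their partial derivatives (by symmetry of second derivatives `c_σ = a_t`
and `d_σ = b_t`), `n` is `‖γ_t'‖`, `D` the determinant, `h` and `h2` are `u'` and `u''`, `k` is the
curvature, given by the two coordinates of the Frenet equation, and `ps` is `∂φ/∂s`. The left-hand
side is the trace of the derivative of `gradU` composed with `(dΦ)⁻¹`. -/
lemma laplacian_identity (a b c d n D as at' bs bt ct dt ns nt h h2 k ps : ℝ)
  (hn : n ≠ 0) (hD0 : D ≠ 0) (hh : h ≠ 0) (hn2 : n^2 = a^2+b^2) (hD : D = a*d-b*c)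
  (hns : n*ns = a*as+b*bs) (hnt : n*nt = a*at'+b*bt)
  (hk0 : k * (-b) = as/n - a*ns/n^2) (hk1 : k*a = bs/n - b*ns/n^2)
  (Ds Dt : ℝ) (hDs : Ds = as*d + a*bt - bs*c - b*at') (hDt : Dt = at'*d+a*dt-bt*c-b*ct)
  (hps : ps = (-(a*c+b*d)/(n*D)) * (Ds/n - D*ns/n^2)
    + ((a^2+b^2)/(n*D)) * (Dt/n - D*nt/n^2)) :
  (d/D*(-(h*bs)/D + h*b*Ds/D^2) + (-b/D)*(-(h2*b+h*bt)/D+h*b*Dt/D^2))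
  + (-c/D*(h*as/D - h*a*Ds/D^2) + (a/D)*((h2*a+h*at')/D-h*a*Dt/D^2))
  = h/(D/n)^2*(h2/h - (ps + k*(D/n))) := by
  rw [← hn2, show n^2/(n*D) = n/D by field_simp] at hps
  have hk : k = (a*bs-b*as)/n^3 := by
    have : k*n^2 = (a*bs-b*as)/n := by
      rw [hn2]; linear_combination a*hk1 - b*hk0
    field_simp at this ⊢
    linear_combination this
  have h1 : ns = (a*as+b*bs)/n := by field_simp; linear_combination hns
  have h3 : nt = (a*at'+b*bt)/n := by field_simp; linear_combination hnt
  subst h1 h3 hk hps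
  have h4 : n^4 = (a^2+b^2)^2 := by rw [← hn2]; ring
  field_simp
  ring_nf
  simp only [hn2, h4]
  subst hDs hDt
  subst hD
  ring

/-- The identity `ΔU = (u'/φ²) (u''/u' − (∂φ/∂s + κφ))` at the point `Φ q`. -/
lemma lap_comp_t {S : Set (ℝ × ℝ)} (hS : IsOpen S)
    {Φ : ℝ × ℝ → EuclideanSpace ℝ (Fin 2)} (hΦ : ContDiffOn ℝ 2 Φ S)
    (hdet : ∀ q ∈ S, 0 < detJ Φ q)
    {t : EuclideanSpace ℝ (Fin 2) → ℝ} (ht : ∀ q ∈ S, t (Φ q) = q.2)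
    {q : ℝ × ℝ} (hq : q ∈ S) {k : ℝ}
    (hk : HasDerivAt (fun σ => ‖Phiσ Φ (σ, q.2)‖⁻¹ • Phiσ Φ (σ, q.2))
      ((‖Phiσ Φ q‖ * k) • NF Φ q) q.1) {δ : ℝ}
    (hδ : ∀ β : ℝ → ℝ × ℝ, β 0 = q →
      (∀ᶠ s in nhds 0, β s ∈ S ∧ HasDerivAt (fun τ => Φ (β τ)) (NF Φ (β s)) s) →
      HasDerivAt (fun s => phiF Φ (β s)) δ 0)
    {u : ℝ → ℝ} (hu : ContDiff ℝ 2 u) (hu' : deriv u q.2 ≠ 0) :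
    lap (fun y => u (t y)) (Φ q) = deriv u q.2 / phiF Φ q ^ 2 *
      (deriv (deriv u) q.2 / deriv u q.2 - (δ + k * phiF Φ q)) := by
  have hc : ContDiffAt ℝ 2 Φ q := hΦ.contDiffAt (hS.mem_nhds hq)
  have hD := (hdet q hq).ne'
  have hn0 := Phiσ_ne_zero hD
  have hn := norm_ne_zero_iff.2 hn0
  obtain ⟨hσ, hτ⟩ := contDiffAt_frame hc
  have hsym := fderiv_Phiσ_eq hc
  -- first derivatives of the entries of the Jacobian matrix, of its determinant and of `‖γ_t'‖`
  have hσd := (hσ.differentiableAt one_ne_zero).hasFDerivAt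
  have hτd := (hτ.differentiableAt one_ne_zero).hasFDerivAt
  have ha : HasFDerivAt (fun q => Phiσ Φ q 0) _ q :=
    (EuclideanSpace.proj 0 : EuclideanSpace ℝ (Fin 2) →L[ℝ] ℝ).hasFDerivAt.comp q hσd
  have hb : HasFDerivAt (fun q => Phiσ Φ q 1) _ q :=
    (EuclideanSpace.proj 1 : EuclideanSpace ℝ (Fin 2) →L[ℝ] ℝ).hasFDerivAt.comp q hσd
  have hcc : HasFDerivAt (fun q => Phit Φ q 0) _ q :=
    (EuclideanSpace.proj 0 : EuclideanSpace ℝ (Fin 2) →L[ℝ] ℝ).hasFDerivAt.comp q hτd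
  have hd : HasFDerivAt (fun q => Phit Φ q 1) _ q :=
    (EuclideanSpace.proj 1 : EuclideanSpace ℝ (Fin 2) →L[ℝ] ℝ).hasFDerivAt.comp q hτd
  have hJ : HasFDerivAt (detJ Φ) _ q := (ha.mul hd).sub (hb.mul hcc)
  have hN := ((hσ.norm ℝ hn0).differentiableAt one_ne_zero).hasFDerivAt
  set n' := fderiv ℝ (fun q => ‖Phiσ Φ q‖) q with hn'
  have hh : HasFDerivAt (fun q : ℝ × ℝ => deriv u q.2)
      (deriv (deriv u) q.2 • ContinuousLinearMap.snd ℝ ℝ ℝ) q := by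
    have h1 : ContDiff ℝ 1 (deriv u) := by
      have h2 : ContDiff ℝ (1 + 1) u := by norm_num; exact hu
      exact (contDiff_succ_iff_deriv.1 h2).2.2
    exact ((h1.differentiable one_ne_zero) q.2).hasDerivAt.comp_hasFDerivAt q
      (hasFDerivAt_snd (𝕜 := ℝ) (p := q))
  -- differentiating `‖γ_t'‖² = x_σ² + y_σ²`
  have hnn : ∀ v, ‖Phiσ Φ q‖ * n' v
      = Phiσ Φ q 0 * (fderiv ℝ (Phiσ Φ) q v) 0 + Phiσ Φ q 1 * (fderiv ℝ (Phiσ Φ) q v) 1 := by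
    intro v
    have h1 : HasFDerivAt (fun q => ‖Phiσ Φ q‖ ^ 2) _ q := hN.pow 2
    simp only [norm_Phiσ_sq] at h1
    have h2 := congrArg (fun L : ℝ × ℝ →L[ℝ] ℝ => L v) (h1.unique ((ha.pow 2).add (hb.pow 2)))
    simp at h2
    linarith
  have hφ : HasFDerivAt (phiF Φ) _ q := hasFDerivAt_quot hJ hN hn
  have hps := dφds_eq hS hΦ hdet hq hδ hφ
  -- the Frenet equation, in coordinates
  have hline : HasDerivAt (fun σ : ℝ => (σ, q.2)) ((1, 0) : ℝ × ℝ) q.1 :=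
    (hasDerivAt_id _).prodMk (hasDerivAt_const _ _)
  have hT (i : Fin 2) (f' : ℝ × ℝ →L[ℝ] ℝ) (hf : HasFDerivAt (fun q => Phiσ Φ q i) f' q) :
      ‖Phiσ Φ q‖ * k * NF Φ q i
        = f' (1, 0) / ‖Phiσ Φ q‖ - Phiσ Φ q i * n' (1, 0) / ‖Phiσ Φ q‖ ^ 2 := by
    have h1 : HasFDerivAt (fun q => Phiσ Φ q i / ‖Phiσ Φ q‖) _ q := hasFDerivAt_quot hf hN hn
    have h2 : HasDerivAt (fun σ : ℝ => Phiσ Φ (σ, q.2) i / ‖Phiσ Φ (σ, q.2)‖) _ q.1 :=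
      h1.comp_hasDerivAt_of_eq q.1 hline rfl
    have h3 := (EuclideanSpace.proj i : EuclideanSpace ℝ (Fin 2) →L[ℝ] ℝ).hasFDerivAt.comp_hasDerivAt
      q.1 hk
    have h4 := h3.unique (h2.congr_of_eventuallyEq (.of_forall fun σ => by simp; ring))
    simp at h4
    rw [h4]
    ring
  have hk0 := hT 0 _ ha
  have hk1 := hT 1 _ hb
  -- the Laplacian, through `∇U = gradU ∘ g` for a local inverse `g`
  obtain ⟨g, hg0, hg1, hg2⟩ := exists_local_inverse hc hD
  have hge : ∀ᶠ y in nhds (Φ q), gradient (fun y => u (t y)) y = gradU Φ u (g y) := by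
    filter_upwards [eventually_t_eq hS ht hq hg0 hg1 hg2.continuousAt, hg1] with y h1 h2
    have := (hasGradientAt_comp_t hS hΦ hdet ht hu h1.1).gradient
    rwa [h2] at this
  have hW0 : HasFDerivAt (fun q => gradU Φ u q 0) _ q := hasFDerivAt_quot (hh.mul hb).neg hJ hD
  have hW1 : HasFDerivAt (fun q => gradU Φ u q 1) _ q := hasFDerivAt_quot (hh.mul ha) hJ hD
  have hcomp (i : Fin 2) (f' : ℝ × ℝ →L[ℝ] ℝ) (hf : HasFDerivAt (fun q => gradU Φ u q i) f' q) :
      HasFDerivAt (fun y => gradient (fun y => u (t y)) y i) (f'.comp (invJ Φ q)) (Φ q) := by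
    rw [← hg0] at hf
    have h1 := hf.comp (Φ q) hg2
    exact h1.congr_of_eventuallyEq (hge.mono fun y hy => by simp [hy])
  rw [lap_two (hcomp 0 _ hW0) (hcomp 1 _ hW1)]
  have split (v : ℝ × ℝ) : v = v.1 • ((1, 0) : ℝ × ℝ) + v.2 • ((0, 1) : ℝ × ℝ) := by ext <;> simp
  have key := laplacian_identity (Phiσ Φ q 0) (Phiσ Φ q 1) (Phit Φ q 0) (Phit Φ q 1) ‖Phiσ Φ q‖ (detJ Φ q)
    (fderiv ℝ (Phiσ Φ) q (1, 0) 0) (fderiv ℝ (Phiσ Φ) q (0, 1) 0)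
    (fderiv ℝ (Phiσ Φ) q (1, 0) 1) (fderiv ℝ (Phiσ Φ) q (0, 1) 1)
    (fderiv ℝ (Phit Φ) q (0, 1) 0) (fderiv ℝ (Phit Φ) q (0, 1) 1)
    (n' (1, 0)) (n' (0, 1)) (deriv u q.2) (deriv (deriv u) q.2) k δ hn hD hu'
    (norm_Phiσ_sq Φ q) (by rw [detJ]) (hnn _) (hnn _)
    (by
      rw [NF_zero] at hk0
      refine Eq.trans ?_ hk0
      field_simp)
    (by
      rw [NF_one] at hk1
      refine Eq.trans ?_ hk1
      field_simp)
    _ _ rfl rfl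
    (by
      rw [hps, split (invJ Φ q (NF Φ q)), map_add, map_smul, map_smul, invJ_apply, NF_zero,
        NF_one]
      simp [← hsym]
      field_simp
      ring)
  rw [phiF, ← key]
  rw [ContinuousLinearMap.comp_apply, ContinuousLinearMap.comp_apply,
    split (invJ Φ q (EuclideanSpace.single 0 1)), split (invJ Φ q (EuclideanSpace.single 1 1)),
    map_add, map_smul, map_smul, map_add, map_smul, map_smul, invJ_apply, invJ_apply]
  simp [← hsym]
  ring

theorem stmt10 (ε : ℝ) (hε : 0 < ε)
    (S : Set (ℝ × ℝ)) (hS : S = Set.univ ×ˢ Set.Ioo (-ε) ε)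
    (Φ : ℝ × ℝ → EuclideanSpace ℝ (Fin 2))
    (hΦ : ContDiffOn ℝ 2 Φ S) (hinj : Set.InjOn Φ S)
    (Ω : Set (EuclideanSpace ℝ (Fin 2))) (hΩ : Ω = Φ '' S) (hΩopen : IsOpen Ω)
    (hdet : ∀ q ∈ S, 0 < detJ Φ q)
    -- t : Ω → (−ε, ε) is the second component of Φ⁻¹
    (t : EuclideanSpace ℝ (Fin 2) → ℝ) (ht : ∀ q ∈ S, t (Φ q) = q.2)
    -- κ is the signed curvature of the curves γ_t with respect to N, defined via the
    -- Frenet equation dT/dσ = ‖γ_t'‖ κ N for the unit tangent field T = γ_t'/‖γ_t'‖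
    (κ : ℝ × ℝ → ℝ)
    (hκ : ∀ q ∈ S, HasDerivAt (fun σ => ‖Phiσ Φ (σ, q.2)‖⁻¹ • Phiσ Φ (σ, q.2))
      ((‖Phiσ Φ q‖ * κ q) • NF Φ q) q.1)
    -- ∂φ/∂s is the derivative of φ (as a function on Ω) along unit-speed integral
    -- curves of N
    (dφds : ℝ × ℝ → ℝ)
    (hdφds : ∀ q ∈ S, ∀ β : ℝ → ℝ × ℝ, β 0 = q →
      (∀ᶠ s in nhds 0, β s ∈ S ∧ HasDerivAt (fun τ => Φ (β τ)) (NF Φ (β s)) s) →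
      HasDerivAt (fun s => phiF Φ (β s)) (dφds q) 0)
    (u : ℝ → ℝ) (hu : ContDiff ℝ 2 u)
    (hu' : ∀ τ ∈ Set.Ioo (-ε) ε, 0 < deriv u τ) :
    (∀ p ∈ Ω, lap (fun y => u (t y)) p = 0) ↔
      (∀ q ∈ S, dφds q + κ q * phiF Φ q = deriv (deriv u) q.2 / deriv u q.2) := by
  have hSo : IsOpen S := by rw [hS]; exact isOpen_univ.prod isOpen_Ioo
  have hup : ∀ q ∈ S, 0 < deriv u q.2 := fun q hq => hu' _ (by rw [hS] at hq; exact hq.2)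
  have hφ : ∀ q ∈ S, phiF Φ q ≠ 0 := fun q hq =>
    div_ne_zero (hdet q hq).ne' (norm_ne_zero_iff.2 (Phiσ_ne_zero (hdet q hq).ne'))
  subst hΩ
  rw [Set.forall_mem_image]
  refine forall₂_congr fun q hq => ?_
  rw [lap_comp_t hSo hΦ hdet ht hq (hκ q hq) (hdφds q hq) hu (hup q hq).ne', mul_eq_zero,
    or_iff_right (div_ne_zero (hup q hq).ne' (pow_ne_zero 2 (hφ q hq))), sub_eq_zero, eq_comm]
end

section
/- Let Φ : ℝ × (−ε, ε) → ℝ² be an orientation-preserving C² diffeomorphism onto a domain Ω ⊆ ℝ², with curves γ_t(σ) = Φ(σ,t), φ = det dΦ/‖γ_t'‖, unit normal field N = ((−∂y/∂σ)e₁ + (∂x/∂σ)e₂)/‖γ_t'‖, κ the signed curvature of the γ_t with respect to N, and s arc length along integral curves of N. Then there exists a critical-point-free harmonic function U on Ω whose level-curve family is {γ_t : t ∈ (−ε,ε)} if and only if ∂/∂σ (∂φ/∂s + κφ) ≡ 0, i.e., ∂φ/∂s + κφ is constant on each curve γ_t. -/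
/-!
A function `U` on `Ω` is constant on every curve `γ_t` exactly when `U ∘ Φ` depends on `t` alone, say
`U ∘ Φ = f(t)`. Then `∇U = f'(t) N / φ` (`grad_eq`), and since `div N = -κ`, taking the divergence
gives
`ΔU = φ⁻² (f'' - f' h)` with `h = ∂φ/∂s + κ φ` (`lap_eq`).
So `U` is harmonic if and only if `f'' = f' h`.

If `U` is harmonic without critical points, then `f' ≠ 0` and `h = f'' / f'` depends on `t` alone.
Conversely, if `h` depends on `t` alone, `f'' = h f'` is an ordinary differential equation with a
solution such that `f' > 0` (`exists_profile`); the function `U = f ∘ t` is `C²` by the inverse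
function theorem (`exists_localInverse`), harmonic, free of critical points, and its level sets are
the `γ_t` because `f` is injective.

The computations are carried out in the coordinates `(σ, t)`: `h` is written as a rational expression
`hF` in the first and second partial derivatives of `Φ`, and `main_eq` shows that it is the function
`∂φ/∂s + κ φ` of the statement. The latter is given through integral curves of `N`, whose existence
is Picard–Lindelöf (`exists_curve`).
-/

open scoped InnerProductSpace

open Set Filter Topology

/-! ### Algebraic identities at a point -/

/-- The function `h = ∂φ/∂s + κ φ` as a rational expression in the partial derivatives of `Φ`:
`(a, b)` stands for `Φ_σ`, `(c, d)` for `Φ_t`, and an index `1` or `2` on a letter marks its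
`σ`- or `t`-derivative. The letters for `c_σ` and `d_σ` are absent because symmetry of second
derivatives identifies them with `a2` and `b2`. With `D = a d - b c` it equals
`-(D / (a² + b²)) (-d (b/D)_σ + b (b/D)_t + a (a/D)_t - c (a/D)_σ)`. -/
noncomputable def hExpr (a b c d a1 a2 b1 b2 c2 d2 : ℝ) : ℝ :=
  -((a * d - b * c) / (a ^ 2 + b ^ 2)) *
    (-d * ((b1 * (a * d - b * c) - b * (a1 * d + a * b2 - (b1 * c + b * a2))) / (a * d - b * c) ^ 2)
      + b * ((b2 * (a * d - b * c) - b * (a2 * d + a * d2 - (b2 * c + b * c2))) / (a * d - b * c) ^ 2)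
      + a * ((a2 * (a * d - b * c) - a * (a2 * d + a * d2 - (b2 * c + b * c2))) / (a * d - b * c) ^ 2)
      - c * ((a1 * (a * d - b * c) - a * (a1 * d + a * b2 - (b1 * c + b * a2))) / (a * d - b * c) ^ 2))

/-- The left side is `∂φ/∂s + κ φ` for `φ = D / r`, where `∂/∂s` is differentiation along the vector
`w = (dΦ)⁻¹ N`, whose coordinates are `(-b d - a c) / (r D)` and `r / D`. The hypotheses `k0`
and `k1` are the two components of the Frenet equation `(Φ_σ / r)_σ = r κ N`, where
`N = (-b, a) / r`. -/
lemma hExpr_eq {a b c d a1 a2 b1 b2 c2 d2 r D κ : ℝ} (hr : r ^ 2 = a ^ 2 + b ^ 2) (hr0 : 0 < r)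
    (hD : D = a * d - b * c) (hD0 : 0 < D)
    (k0 : -(κ * b) = a1 / r - a * ((a * a1 + b * b1) / r) / r ^ 2)
    (k1 : κ * a = b1 / r - b * ((a * a1 + b * b1) / r) / r ^ 2) :
    ((-b * d - a * c) / (r * D)) *
      (((a1 * d + a * b2 - (b1 * c + b * a2)) * r - D * ((a * a1 + b * b1) / r)) / r ^ 2)
    + r / D * (((a2 * d + a * d2 - (b2 * c + b * c2)) * r - D * ((a * a2 + b * b2) / r)) / r ^ 2)
    + κ * (D / r) = hExpr a b c d a1 a2 b1 b2 c2 d2 := by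
  -- Pairing the Frenet equation with `(-b, a)` gives the usual curvature formula.
  have hκ : κ = (a * b1 - b * a1) / r ^ 3 := by
    have : κ * r ^ 2 = (a * b1 - b * a1) / r := by
      rw [hr]
      linear_combination a * k1 - b * k0
    rw [eq_div_iff (by positivity)]
    field_simp at this
    linarith
  subst hκ
  unfold hExpr
  rw [← hD, ← hr]
  field_simp
  simp only [hr]
  subst hD
  ring

/-- The trace of the Hessian `(l_ij)` of `U`, recovered from the chain rule: the hypotheses say that
the derivatives along `Φ_σ` and `Φ_t` of `∇U = f' (-b/D, a/D)` are the ones obtained by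
differentiating that formula in `σ` and `t`; `f1`, `f2` are the values of `f'`, `f''`. -/
lemma lap_expr {a b c d a1 a2 b1 b2 c2 d2 D f1 f2 l00 l01 l10 l11 : ℝ}
    (hab : 0 < a ^ 2 + b ^ 2) (hD : D = a * d - b * c) (hD0 : 0 < D)
    (h1 : a * l00 + b * l01 =
      -(f1 * ((b1 * D - b * (a1 * d + a * b2 - (b1 * c + b * a2))) / D ^ 2)))
    (h2 : c * l00 + d * l01 =
      -(f2 * (b / D) + f1 * ((b2 * D - b * (a2 * d + a * d2 - (b2 * c + b * c2))) / D ^ 2)))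
    (h3 : a * l10 + b * l11 =
      f1 * ((a1 * D - a * (a1 * d + a * b2 - (b1 * c + b * a2))) / D ^ 2))
    (h4 : c * l10 + d * l11 =
      f2 * (a / D) + f1 * ((a2 * D - a * (a2 * d + a * d2 - (b2 * c + b * c2))) / D ^ 2)) :
    l00 + l11 = (a ^ 2 + b ^ 2) / D ^ 2 * (f2 - f1 * hExpr a b c d a1 a2 b1 b2 c2 d2) := by
  have e : D * (l00 + l11) = d * (a * l00 + b * l01) - b * (c * l00 + d * l01)
      + a * (c * l10 + d * l11) - c * (a * l10 + b * l11) := by rw [hD]; ring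
  rw [h1, h2, h3, h4] at e
  apply mul_left_cancel₀ hD0.ne'
  rw [e]
  unfold hExpr
  rw [← hD]
  field_simp
  ring

/-! ### First and second derivatives of `Φ` -/

/-- Coordinate `i` of the derivative of `Φ` in the direction `v`. -/
noncomputable def cf (Φ : ℝ × ℝ → EuclideanSpace ℝ (Fin 2)) (v : ℝ × ℝ) (i : Fin 2)
    (q : ℝ × ℝ) : ℝ := fderiv ℝ Φ q v i

/-- The derivative in the direction `w` of coordinate `i` of the derivative of `Φ` along `v`. -/
noncomputable def cg (Φ : ℝ × ℝ → EuclideanSpace ℝ (Fin 2)) (v : ℝ × ℝ) (i : Fin 2)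
    (w q : ℝ × ℝ) : ℝ := fderiv ℝ (cf Φ v i) q w

/-- The function `h = ∂φ/∂s + κ φ` on the parameter domain, written in the partial derivatives of
`Φ`. In this form its continuity is visible. -/
noncomputable def hF (Φ : ℝ × ℝ → EuclideanSpace ℝ (Fin 2)) (q : ℝ × ℝ) : ℝ :=
  hExpr (cf Φ (1, 0) 0 q) (cf Φ (1, 0) 1 q) (cf Φ (0, 1) 0 q) (cf Φ (0, 1) 1 q)
    (cg Φ (1, 0) 0 (1, 0) q) (cg Φ (1, 0) 0 (0, 1) q)
    (cg Φ (1, 0) 1 (1, 0) q) (cg Φ (1, 0) 1 (0, 1) q)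
    (cg Φ (0, 1) 0 (0, 1) q) (cg Φ (0, 1) 1 (0, 1) q)

section
variable {S : Set (ℝ × ℝ)} {Φ : ℝ × ℝ → EuclideanSpace ℝ (Fin 2)}

lemma cf_contDiffOn (hS : IsOpen S) (hΦ : ContDiffOn ℝ 2 Φ S) (v : ℝ × ℝ) (i : Fin 2) :
    ContDiffOn ℝ 1 (cf Φ v i) S := by
  have h1 : ContDiffOn ℝ 1 (fderiv ℝ Φ) S := hΦ.fderiv_of_isOpen hS (by norm_num)
  have h2 : ContDiffOn ℝ 1 (fun q => fderiv ℝ Φ q v) S := h1.clm_apply contDiffOn_const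
  exact (EuclideanSpace.proj (𝕜 := ℝ) i).contDiff.comp_contDiffOn h2

lemma cg_continuousOn (hS : IsOpen S) (hΦ : ContDiffOn ℝ 2 Φ S) (v : ℝ × ℝ) (i : Fin 2)
    (w : ℝ × ℝ) : ContinuousOn (cg Φ v i w) S :=
  ((cf_contDiffOn hS hΦ v i).continuousOn_fderiv_of_isOpen hS le_rfl).clm_apply continuousOn_const

lemma cf_path (hS : IsOpen S) (hΦ : ContDiffOn ℝ 2 Φ S) (v : ℝ × ℝ) (i : Fin 2) {β : ℝ → ℝ × ℝ}
    {w : ℝ × ℝ} {s : ℝ} (hβ : HasDerivAt β w s) (hs : β s ∈ S) :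
    HasDerivAt (fun τ => cf Φ v i (β τ)) (cg Φ v i w (β s)) s := by
  have h := ((cf_contDiffOn hS hΦ v i).differentiableOn (by norm_num)).differentiableAt
    (hS.mem_nhds hs)
  exact h.hasFDerivAt.comp_hasDerivAt s hβ

lemma cg_symm (hS : IsOpen S) (hΦ : ContDiffOn ℝ 2 Φ S) (v w : ℝ × ℝ) (i : Fin 2) {q : ℝ × ℝ}
    (hq : q ∈ S) : cg Φ v i w q = cg Φ w i v q := by
  have hc : ContDiffAt ℝ 2 Φ q := hΦ.contDiffAt (hS.mem_nhds hq)
  have hsym := hc.isSymmSndFDerivAt (by simp)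
  have h1 : DifferentiableAt ℝ (fderiv ℝ Φ) q :=
    (hc.fderiv_right (m := 1) (by norm_num)).differentiableAt (by norm_num)
  have key : ∀ v w, cg Φ v i w q = fderiv ℝ (fderiv ℝ Φ) q w v i := by
    intro v w
    have h2 : HasFDerivAt (fun q => fderiv ℝ Φ q v) ((fderiv ℝ (fderiv ℝ Φ) q).flip v) q := by
      simpa using h1.hasFDerivAt.clm_apply (hasFDerivAt_const v q)
    have h3 := (EuclideanSpace.proj (𝕜 := ℝ) i).hasFDerivAt.comp q h2
    have h4 : HasFDerivAt (cf Φ v i) _ q := h3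
    unfold cg
    rw [h4.fderiv]
    rfl
  rw [key, key, hsym w v]

lemma cg_lin (w1 w2 : ℝ) (v : ℝ × ℝ) (i : Fin 2) (q : ℝ × ℝ) :
    cg Φ v i (w1, w2) q = w1 * cg Φ v i (1, 0) q + w2 * cg Φ v i (0, 1) q := by
  have : ((w1, w2) : ℝ × ℝ) = w1 • (1, 0) + w2 • (0, 1) := by simp
  unfold cg
  rw [this, map_add, map_smul, map_smul, smul_eq_mul, smul_eq_mul]

lemma cf_lin (w1 w2 : ℝ) (i : Fin 2) (q : ℝ × ℝ) :
    fderiv ℝ Φ q (w1, w2) i = w1 * cf Φ (1, 0) i q + w2 * cf Φ (0, 1) i q := by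
  have : ((w1, w2) : ℝ × ℝ) = w1 • (1, 0) + w2 • (0, 1) := by simp
  rw [this, map_add, map_smul, map_smul]; simp [cf]

lemma detJ_eq (q : ℝ × ℝ) : detJ Φ q =
    cf Φ (1, 0) 0 q * cf Φ (0, 1) 1 q - cf Φ (1, 0) 1 q * cf Φ (0, 1) 0 q := rfl

lemma norm_eq (q : ℝ × ℝ) : ‖Phiσ Φ q‖ =
    Real.sqrt (cf Φ (1, 0) 0 q ^ 2 + cf Φ (1, 0) 1 q ^ 2) := by
  rw [EuclideanSpace.norm_eq]
  simp [Fin.sum_univ_two, cf, Phiσ]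

lemma norm_sq_eq (q : ℝ × ℝ) : ‖Phiσ Φ q‖ ^ 2 = cf Φ (1, 0) 0 q ^ 2 + cf Φ (1, 0) 1 q ^ 2 := by
  rw [norm_eq, Real.sq_sqrt (by positivity)]

lemma sq_pos_of_det {q : ℝ × ℝ} (h : 0 < detJ Φ q) :
    0 < cf Φ (1, 0) 0 q ^ 2 + cf Φ (1, 0) 1 q ^ 2 := by
  rw [detJ_eq] at h
  by_contra hn
  have h0 : cf Φ (1, 0) 0 q = 0 := by nlinarith [sq_nonneg (cf Φ (1, 0) 0 q), sq_nonneg (cf Φ (1, 0) 1 q)]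
  have h1 : cf Φ (1, 0) 1 q = 0 := by nlinarith [sq_nonneg (cf Φ (1, 0) 0 q), sq_nonneg (cf Φ (1, 0) 1 q)]
  rw [h0, h1] at h
  simp at h

lemma norm_pos_of_det {q : ℝ × ℝ} (h : 0 < detJ Φ q) : 0 < ‖Phiσ Φ q‖ := by
  rw [norm_eq]; exact Real.sqrt_pos.2 (sq_pos_of_det h)

lemma NF_zero_s11 (q : ℝ × ℝ) : NF Φ q 0 = ‖Phiσ Φ q‖⁻¹ * -(cf Φ (1, 0) 1 q) := by
  simp [NF, cf, Phiσ]

lemma NF_one_s11 (q : ℝ × ℝ) : NF Φ q 1 = ‖Phiσ Φ q‖⁻¹ * (cf Φ (1, 0) 0 q) := by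
  simp [NF, cf, Phiσ]

lemma hF_continuousOn (hS : IsOpen S) (hΦ : ContDiffOn ℝ 2 Φ S) (hdet : ∀ q ∈ S, 0 < detJ Φ q) :
    ContinuousOn (hF Φ) S := by
  have h1 := fun v i => (cf_contDiffOn hS hΦ v i).continuousOn
  have h2 := fun v i w => cg_continuousOn hS hΦ v i w
  have hD : ContinuousOn (fun q => cf Φ (1, 0) 0 q * cf Φ (0, 1) 1 q -
      cf Φ (1, 0) 1 q * cf Φ (0, 1) 0 q) S := by fun_prop
  have hD0 : ∀ q ∈ S, cf Φ (1, 0) 0 q * cf Φ (0, 1) 1 q -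
      cf Φ (1, 0) 1 q * cf Φ (0, 1) 0 q ≠ 0 := fun q hq => (hdet q hq).ne'
  have hD2 : ∀ q ∈ S, (cf Φ (1, 0) 0 q * cf Φ (0, 1) 1 q -
      cf Φ (1, 0) 1 q * cf Φ (0, 1) 0 q) ^ 2 ≠ 0 := fun q hq => pow_ne_zero _ (hD0 q hq)
  have hr0 : ∀ q ∈ S, cf Φ (1, 0) 0 q ^ 2 + cf Φ (1, 0) 1 q ^ 2 ≠ 0 :=
    fun q hq => (sq_pos_of_det (hdet q hq)).ne'
  unfold hF hExpr
  fun_prop (disch := assumption)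

/-! ### The function `∂φ/∂s + κ φ` -/

lemma det_path (hS : IsOpen S) (hΦ : ContDiffOn ℝ 2 Φ S) {β : ℝ → ℝ × ℝ}
    {w : ℝ × ℝ} {s : ℝ} (hβ : HasDerivAt β w s) (hs : β s ∈ S) :
    HasDerivAt (fun τ => detJ Φ (β τ))
      (cg Φ (1, 0) 0 w (β s) * cf Φ (0, 1) 1 (β s) + cf Φ (1, 0) 0 (β s) * cg Φ (0, 1) 1 w (β s)
      - (cg Φ (1, 0) 1 w (β s) * cf Φ (0, 1) 0 (β s) + cf Φ (1, 0) 1 (β s) * cg Φ (0, 1) 0 w (β s)))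
      s :=
  ((cf_path hS hΦ _ _ hβ hs).mul (cf_path hS hΦ _ _ hβ hs)).sub
    ((cf_path hS hΦ _ _ hβ hs).mul (cf_path hS hΦ _ _ hβ hs))

lemma norm_path (hS : IsOpen S) (hΦ : ContDiffOn ℝ 2 Φ S) (hdet : ∀ q ∈ S, 0 < detJ Φ q)
    {β : ℝ → ℝ × ℝ} {w : ℝ × ℝ} {s : ℝ} (hβ : HasDerivAt β w s) (hs : β s ∈ S) :
    HasDerivAt (fun τ => ‖Phiσ Φ (β τ)‖)
      ((cf Φ (1, 0) 0 (β s) * cg Φ (1, 0) 0 w (β s) + cf Φ (1, 0) 1 (β s) * cg Φ (1, 0) 1 w (β s))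
        / ‖Phiσ Φ (β s)‖) s := by
  have h := (((cf_path hS hΦ (1, 0) 0 hβ hs).pow 2).add
    ((cf_path hS hΦ (1, 0) 1 hβ hs).pow 2)).sqrt (sq_pos_of_det (hdet _ hs)).ne'
  simp only [norm_eq]
  refine h.congr_deriv ?_
  have := Real.sqrt_pos.2 (sq_pos_of_det (hdet _ hs))
  simp only [Pi.add_apply, Pi.pow_apply]
  field_simp
  ring

/-- The normal field, pulled back to the parameter domain by `dΦ`, is `C¹`, so Picard–Lindelöf gives
an integral curve of `N` through any point. Without such a curve the hypothesis describing
`∂φ/∂s` would be vacuous. -/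
lemma exists_curve (hS : IsOpen S) (hΦ : ContDiffOn ℝ 2 Φ S) (hdet : ∀ q ∈ S, 0 < detJ Φ q)
    {q : ℝ × ℝ} (hq : q ∈ S) : ∃ β : ℝ → ℝ × ℝ, β 0 = q ∧
      (∀ᶠ s in nhds 0, β s ∈ S ∧ HasDerivAt (fun τ => Φ (β τ)) (NF Φ (β s)) s) ∧
      HasDerivAt β ((-cf Φ (1, 0) 1 q * cf Φ (0, 1) 1 q - cf Φ (1, 0) 0 q * cf Φ (0, 1) 0 q)
        / (‖Phiσ Φ q‖ * detJ Φ q), ‖Phiσ Φ q‖ / detJ Φ q) 0 := by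
  set v : ℝ × ℝ → ℝ × ℝ := fun q =>
    ((-cf Φ (1, 0) 1 q * cf Φ (0, 1) 1 q - cf Φ (1, 0) 0 q * cf Φ (0, 1) 0 q)
        / (‖Phiσ Φ q‖ * detJ Φ q), ‖Phiσ Φ q‖ / detJ Φ q) with hv
  have hcf := fun v i => (cf_contDiffOn hS hΦ v i).contDiffAt (hS.mem_nhds hq)
  have hDc : ContDiffAt ℝ 1 (detJ Φ) q :=
    ((hcf (1, 0) 0).mul (hcf (0, 1) 1)).sub ((hcf (1, 0) 1).mul (hcf (0, 1) 0))
  have hNc : ContDiffAt ℝ 1 (fun q => ‖Phiσ Φ q‖) q := by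
    simp only [norm_eq]
    exact (((hcf (1, 0) 0).pow 2).add ((hcf (1, 0) 1).pow 2)).sqrt (sq_pos_of_det (hdet _ hq)).ne'
  have hn := norm_pos_of_det (hdet q hq)
  have hvc : ContDiffAt ℝ 1 v q :=
    ((((hcf (1, 0) 1).neg.mul (hcf (0, 1) 1)).sub ((hcf (1, 0) 0).mul (hcf (0, 1) 0))).div
      (hNc.mul hDc) (mul_pos hn (hdet q hq)).ne').prodMk (hNc.div hDc (hdet q hq).ne')
  obtain ⟨β, hβ0, δ, hδ, hβ⟩ :=
    hvc.exists_forall_mem_closedBall_exists_eq_forall_mem_Ioo_hasDerivAt₀ 0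
  have h0 : HasDerivAt β (v q) 0 := by
    have := hβ 0 (by constructor <;> linarith)
    rwa [hβ0] at this
  refine ⟨β, hβ0, ?_, h0⟩
  have e1 : ∀ᶠ s in 𝓝 (0 : ℝ), β s ∈ S := by
    apply h0.continuousAt.eventually_mem
    rw [hβ0]; exact hS.mem_nhds hq
  filter_upwards [e1, Ioo_mem_nhds (a := 0 - δ) (b := 0 + δ) (by linarith) (by linarith)] with s hs hsI
  refine ⟨hs, ?_⟩
  have hd : DifferentiableAt ℝ Φ (β s) :=
    (hΦ.differentiableOn (by norm_num)).differentiableAt (hS.mem_nhds hs)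
  refine (hd.hasFDerivAt.comp_hasDerivAt s (hβ s hsI)).congr_deriv ?_
  have hn := norm_pos_of_det (hdet _ hs)
  have hD := hdet _ hs
  have hr := norm_sq_eq (Φ := Φ) (β s)
  have hDe := detJ_eq (Φ := Φ) (β s)
  ext i
  fin_cases i
  · simp only [hv, Fin.zero_eta, cf_lin, NF_zero_s11]
    field_simp
    rw [hr, hDe]; ring
  · simp only [hv, Fin.mk_one, cf_lin, NF_one_s11]
    field_simp
    rw [hr, hDe]; ring

/-- Any number `x` that is the derivative of `φ` along every integral curve of `N` through `q`, and
any number `κ` satisfying the Frenet equation at `q`, combine to `x + κ φ = h`. -/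
lemma main_eq (hS : IsOpen S) (hΦ : ContDiffOn ℝ 2 Φ S) (hdet : ∀ q ∈ S, 0 < detJ Φ q)
    {κ x : ℝ} {q : ℝ × ℝ} (hq : q ∈ S)
    (hκ : HasDerivAt (fun σ => ‖Phiσ Φ (σ, q.2)‖⁻¹ • Phiσ Φ (σ, q.2))
      ((‖Phiσ Φ q‖ * κ) • NF Φ q) q.1)
    (hx : ∀ β : ℝ → ℝ × ℝ, β 0 = q →
      (∀ᶠ s in nhds 0, β s ∈ S ∧ HasDerivAt (fun τ => Φ (β τ)) (NF Φ (β s)) s) →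
      HasDerivAt (fun s => phiF Φ (β s)) x 0) :
    x + κ * phiF Φ q = hF Φ q := by
  obtain ⟨β, hβ0, hβ, hβ'⟩ := exists_curve hS hΦ hdet hq
  generalize hw1 : (-cf Φ (1, 0) 1 q * cf Φ (0, 1) 1 q - cf Φ (1, 0) 0 q * cf Φ (0, 1) 0 q)
    / (‖Phiσ Φ q‖ * detJ Φ q) = w1 at hβ'
  generalize hw2 : ‖Phiσ Φ q‖ / detJ Φ q = w2 at hβ'
  have hβS : β 0 ∈ S := hβ0 ▸ hq
  have hxe := (hx β hβ0 hβ).unique ((det_path hS hΦ hβ' hβS).div (norm_path hS hΦ hdet hβ' hβS)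
    (norm_pos_of_det (hdet _ hβS)).ne')
  have hr := norm_sq_eq (Φ := Φ) q
  have hr0 := norm_pos_of_det (hdet _ hq)
  have hline : HasDerivAt (fun σ : ℝ => (σ, q.2)) ((1 : ℝ), (0 : ℝ)) q.1 :=
    (hasDerivAt_id _).prodMk (hasDerivAt_const _ _)
  have hqe : (q.1, q.2) = q := rfl
  have hn := norm_path hS hΦ hdet hline hq
  have hk : ∀ i, HasDerivAt (fun σ => ‖Phiσ Φ (σ, q.2)‖⁻¹ * cf Φ (1, 0) i (σ, q.2))
      (‖Phiσ Φ q‖ * κ * NF Φ q i) q.1 := by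
    intro i
    exact (EuclideanSpace.proj (𝕜 := ℝ) i).hasFDerivAt.comp_hasDerivAt q.1 hκ
  have k := fun i => (hk i).unique ((hn.inv hr0.ne').mul (cf_path hS hΦ (1, 0) i hline hq))
  have k0 := k 0
  have k1 := k 1
  rw [NF_zero_s11] at k0
  rw [NF_one_s11] at k1
  simp only [hqe, Pi.inv_apply] at k0 k1
  unfold hF
  rw [← hExpr_eq (κ := κ) hr hr0 (detJ_eq q) (hdet q hq), hxe]
  · simp only [hβ0, phiF]
    rw [hw1, hw2]
    simp only [cg_lin w1 w2]
    rw [cg_symm hS hΦ (0, 1) (1, 0) _ hq,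
      cg_symm hS hΦ (0, 1) (1, 0) _ hq]
    field_simp
    ring
  · field_simp at k0 ⊢
    linarith
  · field_simp at k1 ⊢
    linarith

/-! ### Functions constant along the curves `γ_t` -/

lemma mem_nhds_of_path {β : ℝ → ℝ × ℝ} {w : ℝ × ℝ} {s : ℝ} (hS : IsOpen S)
    (hβ : HasDerivAt β w s) (hs : β s ∈ S) : ∀ᶠ τ in 𝓝 s, β τ ∈ S :=
  hβ.continuousAt.eventually_mem (hS.mem_nhds hs)

lemma Phi_path (hS : IsOpen S) (hΦ : ContDiffOn ℝ 2 Φ S) {β : ℝ → ℝ × ℝ}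
    {w : ℝ × ℝ} {s : ℝ} (hβ : HasDerivAt β w s) (hs : β s ∈ S) :
    HasDerivAt (fun τ => Φ (β τ)) (fderiv ℝ Φ (β s) w) s :=
  ((hΦ.differentiableOn (by norm_num)).differentiableAt
    (hS.mem_nhds hs)).hasFDerivAt.comp_hasDerivAt s hβ

lemma horiz (q : ℝ × ℝ) : HasDerivAt (fun σ : ℝ => (σ, q.2)) ((1 : ℝ), (0 : ℝ)) q.1 :=
  (hasDerivAt_id _).prodMk (hasDerivAt_const _ _)

lemma vert (q : ℝ × ℝ) : HasDerivAt (fun t : ℝ => (q.1, t)) ((0 : ℝ), (1 : ℝ)) q.2 :=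
  (hasDerivAt_const _ _).prodMk (hasDerivAt_id _)

lemma vec_eq (x : EuclideanSpace ℝ (Fin 2)) :
    x = x 0 • EuclideanSpace.single 0 (1 : ℝ) + x 1 • EuclideanSpace.single 1 (1 : ℝ) := by
  ext i
  fin_cases i <;> simp

/-- If `U ∘ Φ = f(t)` then `∇U = f' N / φ`, because `∇U` pairs to `0` with `Φ_σ` and to `f'` with
`Φ_t`. -/
lemma grad_eq (hS : IsOpen S) (hΦ : ContDiffOn ℝ 2 Φ S) (hdet : ∀ q ∈ S, 0 < detJ Φ q)
    {U : EuclideanSpace ℝ (Fin 2) → ℝ} {f : ℝ → ℝ} {f1 : ℝ} {q : ℝ × ℝ} (hq : q ∈ S)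
    (hU : DifferentiableAt ℝ U (Φ q)) (hUf : ∀ q ∈ S, U (Φ q) = f q.2)
    (hf : HasDerivAt f f1 q.2) :
    gradient U (Φ q) 0 = -(f1 * (cf Φ (1, 0) 1 q / detJ Φ q)) ∧
      gradient U (Φ q) 1 = f1 * (cf Φ (1, 0) 0 q / detJ Φ q) := by
  -- The chain rule for `U ∘ Φ ∘ β`, used below for the two coordinate lines through `q`.
  have hp : ∀ {β : ℝ → ℝ × ℝ} {w : ℝ × ℝ} {s x : ℝ}, HasDerivAt β w s → β s = q →
      HasDerivAt (fun τ => f (β τ).2) x s →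
      gradient U (Φ q) 0 * cf Φ w 0 q + gradient U (Φ q) 1 * cf Φ w 1 q = x := by
    intro β w s x hβ hs hx
    have hsS : β s ∈ S := hs ▸ hq
    have hU' : DifferentiableAt ℝ U (Φ (β s)) := hs ▸ hU
    have h1 := hU'.hasFDerivAt.comp_hasDerivAt s (Phi_path hS hΦ hβ hsS)
    have h2 : HasDerivAt (U ∘ fun τ => Φ (β τ)) x s := hx.congr_of_eventuallyEq <| by
      filter_upwards [mem_nhds_of_path hS hβ hsS] with τ hτ using hUf _ hτ
    have h3 := h1.unique h2
    rw [hs] at h3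
    rw [← h3, ← inner_gradient_left, PiLp.inner_apply, Fin.sum_univ_two]
    simp [cf, mul_comm]
  have e1 := hp (horiz q) rfl (hasDerivAt_const q.1 (f q.2))
  have e2 := hp (vert q) rfl hf
  have hD := hdet q hq
  have hDe := detJ_eq (Φ := Φ) q
  constructor
  · field_simp
    rw [hDe]
    linear_combination cf Φ (0, 1) 1 q * e1 - cf Φ (1, 0) 1 q * e2
  · field_simp
    rw [hDe]
    linear_combination -cf Φ (0, 1) 0 q * e1 + cf Φ (1, 0) 0 q * e2

lemma gradient_contDiffAt {U : EuclideanSpace ℝ (Fin 2) → ℝ} {p : EuclideanSpace ℝ (Fin 2)}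
    (hU : ContDiffAt ℝ 2 U p) : ContDiffAt ℝ 1 (gradient U) p := by
  have h : ContDiffAt ℝ 1 (fderiv ℝ U) p := hU.fderiv_right (by norm_num)
  exact (InnerProductSpace.toDual ℝ (EuclideanSpace ℝ (Fin 2))).symm.contDiff.contDiffAt.comp p h

/-- The central identity: if `U ∘ Φ = f(t)` then `ΔU = φ⁻² (f'' - f' h)`; the factor in front is
`φ⁻² = ‖Φ_σ‖² / (det dΦ)²`. -/
lemma lap_eq (hS : IsOpen S) (hΦ : ContDiffOn ℝ 2 Φ S) (hdet : ∀ q ∈ S, 0 < detJ Φ q)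
    {U : EuclideanSpace ℝ (Fin 2) → ℝ} {f f1 : ℝ → ℝ} {f2 : ℝ} {q : ℝ × ℝ} (hq : q ∈ S)
    (hU : ∀ q ∈ S, ContDiffAt ℝ 2 U (Φ q)) (hUf : ∀ q ∈ S, U (Φ q) = f q.2)
    (hf : ∀ q ∈ S, HasDerivAt f (f1 q.2) q.2) (hf1 : HasDerivAt f1 f2 q.2) :
    lap U (Φ q) = (cf Φ (1, 0) 0 q ^ 2 + cf Φ (1, 0) 1 q ^ 2) / detJ Φ q ^ 2 *
      (f2 - f1 q.2 * hF Φ q) := by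
  have hg := fun q hq => grad_eq hS hΦ hdet hq ((hU q hq).differentiableAt (by norm_num)) hUf (hf q hq)
  have hd : DifferentiableAt ℝ (gradient U) (Φ q) :=
    (gradient_contDiffAt (hU q hq)).differentiableAt (by norm_num)
  set L := fderiv ℝ (gradient U) (Φ q) with hL
  have hp : ∀ {β : ℝ → ℝ × ℝ} {w : ℝ × ℝ} {s : ℝ}, HasDerivAt β w s → β s = q → ∀ i,
      HasDerivAt (fun τ => gradient U (Φ (β τ)) i)
        (cf Φ w 0 q * L (EuclideanSpace.single 0 1) i
          + cf Φ w 1 q * L (EuclideanSpace.single 1 1) i) s := by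
    intro β w s hβ hs i
    subst hs
    have h1 := hd.hasFDerivAt.comp_hasDerivAt s (Phi_path hS hΦ hβ hq)
    have h2 := (EuclideanSpace.proj (𝕜 := ℝ) i).hasFDerivAt.comp_hasDerivAt s h1
    refine h2.congr_deriv ?_
    rw [vec_eq (fderiv ℝ Φ (β s) w), map_add, map_smul, map_smul]
    simp [cf, hL]
  have hquot : ∀ {β : ℝ → ℝ × ℝ} {w : ℝ × ℝ} {s : ℝ} {g : ℝ}, (hβ : HasDerivAt β w s) → β s = q →
      HasDerivAt (fun τ => f1 (β τ).2) g s → _ := fun {β w s g} hβ hs hg1 i =>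
    hg1.mul ((cf_path hS hΦ (1, 0) i hβ (hs ▸ hq)).div (det_path hS hΦ hβ (hs ▸ hq))
      (hdet _ (hs ▸ hq)).ne')
  have hev : ∀ {β : ℝ → ℝ × ℝ} {w : ℝ × ℝ} {s : ℝ} {x : ℝ}, (hβ : HasDerivAt β w s) → β s = q →
      ((HasDerivAt (fun τ => -(f1 (β τ).2 * (cf Φ (1, 0) 1 (β τ) / detJ Φ (β τ)))) x s →
        HasDerivAt (fun τ => gradient U (Φ (β τ)) 0) x s) ∧
      (HasDerivAt (fun τ => (f1 (β τ).2 * (cf Φ (1, 0) 0 (β τ) / detJ Φ (β τ)))) x s →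
        HasDerivAt (fun τ => gradient U (Φ (β τ)) 1) x s)) := by
    intro β w s x hβ hs
    have he := mem_nhds_of_path hS hβ (hs ▸ hq)
    constructor
    · refine fun h => h.congr_of_eventuallyEq ?_
      filter_upwards [he] with τ hτ using (hg _ hτ).1
    · refine fun h => h.congr_of_eventuallyEq ?_
      filter_upwards [he] with τ hτ using (hg _ hτ).2
  have hc : HasDerivAt (fun _ : ℝ => f1 q.2) 0 q.1 := hasDerivAt_const _ _
  have h1 := (hp (horiz q) rfl 0).unique ((hev (horiz q) rfl).1 (hquot (horiz q) rfl hc 1).neg)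
  have h2 := (hp (vert q) rfl 0).unique ((hev (vert q) rfl).1 (hquot (vert q) rfl hf1 1).neg)
  have h3 := (hp (horiz q) rfl 1).unique ((hev (horiz q) rfl).2 (hquot (horiz q) rfl hc 0))
  have h4 := (hp (vert q) rfl 1).unique ((hev (vert q) rfl).2 (hquot (vert q) rfl hf1 0))
  have hqe : (q.1, q.2) = q := rfl
  simp only [hqe, cg_symm hS hΦ (0, 1) (1, 0) _ hq, zero_mul, zero_add, Pi.div_apply] at h1 h2 h3 h4
  rw [show lap U (Φ q) = L (EuclideanSpace.single 0 1) 0 + L (EuclideanSpace.single 1 1) 1 by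
    rw [lap, Fin.sum_univ_two, ← hL, EuclideanSpace.inner_single_right,
      EuclideanSpace.inner_single_right]
    simp]
  exact lap_expr (sq_pos_of_det (hdet q hq)) (detJ_eq q) (hdet q hq) h1 h2 h3 h4

/-- `Φ` has a `C²` local right inverse near each point of its image, by the inverse function
theorem. -/
lemma exists_localInverse (hS : IsOpen S) (hΦ : ContDiffOn ℝ 2 Φ S)
    (hdet : ∀ q ∈ S, 0 < detJ Φ q) {q : ℝ × ℝ} (hq : q ∈ S) :
    ∃ g : EuclideanSpace ℝ (Fin 2) → ℝ × ℝ, ContDiffAt ℝ 2 g (Φ q) ∧ g (Φ q) = q ∧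
      ∀ᶠ y in 𝓝 (Φ q), g y ∈ S ∧ Φ (g y) = y := by
  have hc : ContDiffAt ℝ 2 Φ q := hΦ.contDiffAt (hS.mem_nhds hq)
  have hd : HasFDerivAt Φ (fderiv ℝ Φ q) q := (hc.differentiableAt (by norm_num)).hasFDerivAt
  have hD := hdet q hq
  rw [detJ_eq] at hD
  have hi : Function.Injective (fderiv ℝ Φ q).toLinearMap := by
    rw [← LinearMap.ker_eq_bot, LinearMap.ker_eq_bot']
    rintro ⟨w1, w2⟩ hw
    have e0 := congrArg (fun x => x 0) hw
    have e1 := congrArg (fun x => x 1) hw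
    simp only [ContinuousLinearMap.coe_coe, cf_lin, PiLp.zero_apply] at e0 e1
    have z1 : (cf Φ (1, 0) 0 q * cf Φ (0, 1) 1 q - cf Φ (1, 0) 1 q * cf Φ (0, 1) 0 q) * w1 = 0 := by
      linear_combination cf Φ (0, 1) 1 q * e0 - cf Φ (0, 1) 0 q * e1
    have z2 : (cf Φ (1, 0) 0 q * cf Φ (0, 1) 1 q - cf Φ (1, 0) 1 q * cf Φ (0, 1) 0 q) * w2 = 0 := by
      linear_combination -cf Φ (1, 0) 1 q * e0 + cf Φ (1, 0) 0 q * e1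
    simp only [mul_eq_zero, hD.ne', false_or] at z1 z2
    simp [z1, z2]
  let e : (ℝ × ℝ) ≃L[ℝ] EuclideanSpace ℝ (Fin 2) :=
    (LinearMap.linearEquivOfInjective (fderiv ℝ Φ q).toLinearMap hi
      (by simp)).toContinuousLinearEquiv
  have he : (e : (ℝ × ℝ) →L[ℝ] EuclideanSpace ℝ (Fin 2)) = fderiv ℝ Φ q := by
    ext x <;> rfl
  rw [← he] at hd
  have h2 : (2 : WithTop ℕ∞) ≠ 0 := by norm_num
  have hgc := hc.to_localInverse hd h2
  have hg0 := hc.localInverse_apply_image hd h2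
  refine ⟨hc.localInverse hd h2, hgc, hg0, ?_⟩
  refine (hgc.continuousAt.eventually_mem (by rw [hg0]; exact hS.mem_nhds hq)).and ?_
  exact (hc.hasStrictFDerivAt' hd h2).eventually_right_inverse

end

/-! ### The profile function -/

/-- The ordinary differential equation `f'' = h f'` has a `C²` solution with `f' > 0`, namely
`f(t) = ∫₀ᵗ exp (∫₀ᵘ h) du`. -/
lemma exists_profile {ε : ℝ} (hε : 0 < ε) {h : ℝ → ℝ} (hh : ContinuousOn h (Ioo (-ε) ε)) :
    ∃ f f1 : ℝ → ℝ, (∀ t ∈ Ioo (-ε) ε, HasDerivAt f (f1 t) t) ∧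
      (∀ t ∈ Ioo (-ε) ε, HasDerivAt f1 (f1 t * h t) t) ∧ (∀ t, 0 < f1 t) ∧
      ContDiffOn ℝ 2 f (Ioo (-ε) ε) := by
  have ftc : ∀ g : ℝ → ℝ, ContinuousOn g (Ioo (-ε) ε) → ∀ t ∈ Ioo (-ε) ε,
      HasDerivAt (fun u => ∫ x in (0 : ℝ)..u, g x) (g t) t := by
    intro g hg t ht
    refine intervalIntegral.integral_hasDerivAt_right ?_ ?_ (hg.continuousAt (isOpen_Ioo.mem_nhds ht))
    · apply ContinuousOn.intervalIntegrable
      exact hg.mono (ordConnected_Ioo.uIcc_subset ⟨by linarith, hε⟩ ht)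
    · exact hg.stronglyMeasurableAtFilter isOpen_Ioo t ht
  set f1 : ℝ → ℝ := fun t => Real.exp (∫ x in (0 : ℝ)..t, h x) with hf1
  have d1 : ∀ t ∈ Ioo (-ε) ε, HasDerivAt f1 (f1 t * h t) t := fun t ht => (ftc h hh t ht).exp
  have c1 : ContinuousOn f1 (Ioo (-ε) ε) := fun t ht => (d1 t ht).continuousAt.continuousWithinAt
  have d0 := ftc f1 c1
  refine ⟨_, f1, d0, d1, fun t => Real.exp_pos _, ?_⟩
  have C1 : ContDiffOn ℝ 1 f1 (Ioo (-ε) ε) := by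
    rw [show (1 : WithTop ℕ∞) = 0 + 1 by norm_num, contDiffOn_succ_iff_deriv_of_isOpen isOpen_Ioo]
    refine ⟨fun t ht => (d1 t ht).differentiableAt.differentiableWithinAt, by simp, ?_⟩
    rw [contDiffOn_zero]
    exact (c1.mul hh).congr fun t ht => (d1 t ht).deriv
  rw [show (2 : WithTop ℕ∞) = 1 + 1 by norm_num, contDiffOn_succ_iff_deriv_of_isOpen isOpen_Ioo]
  exact ⟨fun t ht => (d0 t ht).differentiableAt.differentiableWithinAt, by simp,
    C1.congr fun t ht => (d0 t ht).deriv⟩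

theorem stmt11 (ε : ℝ) (hε : 0 < ε)
    (S : Set (ℝ × ℝ)) (hS : S = Set.univ ×ˢ Set.Ioo (-ε) ε)
    (Φ : ℝ × ℝ → EuclideanSpace ℝ (Fin 2))
    (hΦ : ContDiffOn ℝ 2 Φ S) (hinj : Set.InjOn Φ S)
    (Ω : Set (EuclideanSpace ℝ (Fin 2))) (hΩ : Ω = Φ '' S) (hΩopen : IsOpen Ω)
    (hdet : ∀ q ∈ S, 0 < detJ Φ q)
    -- κ is the signed curvature of the curves γ_t with respect to N, defined via the
    -- Frenet equation dT/dσ = ‖γ_t'‖ κ N for the unit tangent field T = γ_t'/‖γ_t'‖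
    (κ : ℝ × ℝ → ℝ)
    (hκ : ∀ q ∈ S, HasDerivAt (fun σ => ‖Phiσ Φ (σ, q.2)‖⁻¹ • Phiσ Φ (σ, q.2))
      ((‖Phiσ Φ q‖ * κ q) • NF Φ q) q.1)
    -- ∂φ/∂s is the derivative of φ (as a function on Ω) along unit-speed integral
    -- curves of N
    (dφds : ℝ × ℝ → ℝ)
    (hdφds : ∀ q ∈ S, ∀ β : ℝ → ℝ × ℝ, β 0 = q →
      (∀ᶠ s in nhds 0, β s ∈ S ∧ HasDerivAt (fun τ => Φ (β τ)) (NF Φ (β s)) s) →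
      HasDerivAt (fun s => phiF Φ (β s)) (dφds q) 0) :
    (∃ U : EuclideanSpace ℝ (Fin 2) → ℝ,
      ContDiffOn ℝ 2 U Ω ∧
      (∀ p ∈ Ω, gradient U p ≠ 0) ∧
      (∀ p ∈ Ω, lap U p = 0) ∧
      -- each γ_t is a level set of U, and every level set of U is some γ_t
      (∀ τ ∈ Set.Ioo (-ε) ε, ∃ c : ℝ,
        {p ∈ Ω | U p = c} = (fun σ => Φ (σ, τ)) '' Set.univ) ∧
      (∀ c : ℝ, {p ∈ Ω | U p = c}.Nonempty → ∃ τ ∈ Set.Ioo (-ε) ε,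
        {p ∈ Ω | U p = c} = (fun σ => Φ (σ, τ)) '' Set.univ)) ↔
    (∀ τ ∈ Set.Ioo (-ε) ε, ∀ σ₁ σ₂ : ℝ,
      dφds (σ₁, τ) + κ (σ₁, τ) * phiF Φ (σ₁, τ) =
        dφds (σ₂, τ) + κ (σ₂, τ) * phiF Φ (σ₂, τ)) := by
  have hSo : IsOpen S := hS ▸ isOpen_univ.prod isOpen_Ioo
  have hmem : ∀ {q : ℝ × ℝ}, q ∈ S ↔ q.2 ∈ Ioo (-ε) ε := by
    intro q; rw [hS]; simp
  have key : ∀ q ∈ S, dφds q + κ q * phiF Φ q = hF Φ q := fun q hq =>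
    main_eq hSo hΦ hdet hq (hκ q hq) (hdφds q hq)
  have hΩm : ∀ q ∈ S, Φ q ∈ Ω := fun q hq => hΩ ▸ mem_image_of_mem Φ hq
  have hvert : ∀ t ∈ Ioo (-ε) ε, ((0 : ℝ), t) ∈ S := fun t ht => hmem.2 ht
  constructor
  · rintro ⟨U, hU, hgrad, hlap, hlev, -⟩
    have hUc : ∀ q ∈ S, ContDiffAt ℝ 2 U (Φ q) := fun q hq =>
      hU.contDiffAt (hΩopen.mem_nhds (hΩm q hq))
    -- Since `U` is constant on each curve, its values can be read off on the line `σ = 0`.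
    set f : ℝ → ℝ := fun t => U (Φ (0, t)) with hf
    have hUf : ∀ q ∈ S, U (Φ q) = f q.2 := by
      intro q hq
      obtain ⟨c, hc⟩ := hlev q.2 (hmem.1 hq)
      have h1 : Φ q ∈ {p ∈ Ω | U p = c} := hc ▸ ⟨q.1, mem_univ _, rfl⟩
      have h2 : Φ (0, q.2) ∈ {p ∈ Ω | U p = c} := hc ▸ ⟨0, mem_univ _, rfl⟩
      exact h1.2.trans h2.2.symm
    have hfc : ContDiffOn ℝ 2 f (Ioo (-ε) ε) := by
      refine hU.comp (hΦ.comp (f := fun t : ℝ => ((0 : ℝ), t)) (by fun_prop) hvert) ?_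
      exact fun t ht => hΩm _ (hvert t ht)
    have hf1 : ∀ q ∈ S, HasDerivAt f (deriv f q.2) q.2 := fun q hq =>
      ((hfc.differentiableOn (by norm_num)).differentiableAt
        (isOpen_Ioo.mem_nhds (hmem.1 hq))).hasDerivAt
    have hf2 : ∀ q ∈ S, HasDerivAt (deriv f) (deriv (deriv f) q.2) q.2 := fun q hq =>
      (((hfc.deriv_of_isOpen (m := 1) isOpen_Ioo (by norm_num)).differentiableOn
        (by norm_num)).differentiableAt (isOpen_Ioo.mem_nhds (hmem.1 hq))).hasDerivAt
    have hne : ∀ q ∈ S, deriv f q.2 ≠ 0 := by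
      intro q hq h0
      have := grad_eq hSo hΦ hdet hq ((hUc q hq).differentiableAt (by norm_num)) hUf (hf1 q hq)
      apply hgrad _ (hΩm q hq)
      rw [h0] at this
      ext i
      fin_cases i
      · simpa using this.1
      · simpa using this.2
    have hval : ∀ q ∈ S, hF Φ q = deriv (deriv f) q.2 / deriv f q.2 := by
      intro q hq
      have h := lap_eq hSo hΦ hdet hq hUc hUf hf1 (hf2 q hq)
      rw [hlap _ (hΩm q hq)] at h
      have hpos : 0 < (cf Φ (1, 0) 0 q ^ 2 + cf Φ (1, 0) 1 q ^ 2) / detJ Φ q ^ 2 :=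
        div_pos (sq_pos_of_det (hdet q hq)) (pow_pos (hdet q hq) 2)
      have h' := (mul_eq_zero.1 h.symm).resolve_left hpos.ne'
      rw [eq_div_iff (hne q hq)]
      linarith
    intro τ hτ σ₁ σ₂
    rw [key _ (hmem.2 hτ), key _ (hmem.2 hτ), hval _ (hmem.2 hτ), hval _ (hmem.2 hτ)]
  · intro hconst
    have hFc : ∀ q ∈ S, hF Φ q = hF Φ (0, q.2) := by
      intro q hq
      rw [← key _ hq, ← key (0, q.2) (hvert _ (hmem.1 hq))]
      exact hconst q.2 (hmem.1 hq) q.1 0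
    obtain ⟨f, f1, hf, hf1, hpos, hfc⟩ := exists_profile hε (h := fun t => hF Φ (0, t))
      ((hF_continuousOn hSo hΦ hdet).comp (by fun_prop) hvert)
    -- `U = f ∘ t`, where `t` is the second coordinate of `Φ⁻¹`; values outside `Ω` are irrelevant.
    set U : EuclideanSpace ℝ (Fin 2) → ℝ := fun p => f (Function.invFunOn Φ S p).2 with hUdef
    have hUf : ∀ q ∈ S, U (Φ q) = f q.2 := by
      intro q hq
      simp only [hUdef]
      rw [hinj.leftInvOn_invFunOn hq]
    have hUc : ∀ q ∈ S, ContDiffAt ℝ 2 U (Φ q) := by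
      intro q hq
      obtain ⟨g, hgc, hg0, hg⟩ := exists_localInverse hSo hΦ hdet hq
      have h1 : ContDiffAt ℝ 2 (fun y => f (g y).2) (Φ q) := by
        have hfq : ContDiffAt ℝ 2 f (g (Φ q)).2 := by
          rw [hg0]
          exact hfc.contDiffAt (isOpen_Ioo.mem_nhds (hmem.1 hq))
        exact hfq.comp (Φ q) hgc.snd
      -- By injectivity of `Φ`, the global inverse agrees with the local one near `Φ q`.
      refine h1.congr_of_eventuallyEq ?_
      filter_upwards [hg] with y hy
      conv_lhs => rw [← hy.2]
      exact hUf _ hy.1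
    have hf' : ∀ q ∈ S, HasDerivAt f (f1 q.2) q.2 := fun q hq => hf _ (hmem.1 hq)
    have hmono : StrictMonoOn f (Ioo (-ε) ε) := by
      refine strictMonoOn_of_deriv_pos (convex_Ioo _ _) hfc.continuousOn ?_
      intro t ht
      rw [interior_Ioo] at ht
      rw [(hf t ht).deriv]
      exact hpos t
    have hlev : ∀ τ ∈ Ioo (-ε) ε, {p ∈ Ω | U p = f τ} = (fun σ => Φ (σ, τ)) '' univ := by
      intro τ hτ
      ext p
      constructor
      · rintro ⟨hp, hpU⟩
        rw [hΩ] at hp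
        obtain ⟨q, hq, rfl⟩ := hp
        rw [hUf q hq] at hpU
        have := hmono.injOn (hmem.1 hq) hτ hpU
        exact ⟨q.1, mem_univ _, by rw [← this]⟩
      · rintro ⟨σ, -, rfl⟩
        have hq : (σ, τ) ∈ S := hmem.2 hτ
        exact ⟨hΩm _ hq, hUf _ hq⟩
    refine ⟨U, ?_, ?_, ?_, fun τ hτ => ⟨f τ, hlev τ hτ⟩, ?_⟩
    · rw [hΩ]
      rintro _ ⟨q, hq, rfl⟩
      exact (hUc q hq).contDiffWithinAt
    · rw [hΩ]
      rintro _ ⟨q, hq, rfl⟩ h0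
      have h := grad_eq hSo hΦ hdet hq ((hUc q hq).differentiableAt (by norm_num)) hUf (hf' q hq)
      rw [h0] at h
      have hD := (hdet q hq).ne'
      have hp := (hpos q.2).ne'
      have hb : cf Φ (1, 0) 1 q = 0 := by simpa [hD, hp] using h.1
      have ha : cf Φ (1, 0) 0 q = 0 := by simpa [hD, hp] using h.2
      have := sq_pos_of_det (hdet q hq)
      rw [ha, hb] at this
      norm_num at this
    · rw [hΩ]
      rintro _ ⟨q, hq, rfl⟩
      rw [lap_eq hSo hΦ hdet hq hUc hUf hf' (hf1 q.2 (hmem.1 hq)), hFc q hq]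
      simp
    · rintro c ⟨p, hp, hpc⟩
      rw [hΩ] at hp
      obtain ⟨q, hq, rfl⟩ := hp
      refine ⟨q.2, hmem.1 hq, ?_⟩
      rw [← hpc, hUf q hq]
      exact hlev _ (hmem.1 hq)
end

section
/- Let Φ : ℝⁿ⁻¹ × (−ε, ε) → ℝⁿ be an orientation-preserving C² diffeomorphism onto a domain Ω ⊆ ℝⁿ, with hypersurfaces Γ_t(x) = Φ(x;t), n the (Hodge-dual) normal vector to Γ_t, N = n/‖n‖, φ = det dΦ/‖n‖, H the mean curvature of the Γ_t with respect to N, and s arc length along integral curves of N. Then there exists a critical-point-free harmonic function U on Ω whose level-set family is {Γ_t} if and only if ∂/∂x_i (∂φ/∂s + (n−1)Hφ) = 0 for all i = 1, …, n−1, i.e., ∂φ/∂s + (n−1)Hφ is constant on each Γ_t. -/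
/-!
Let `T = t ∘ Φ⁻¹` be the time coordinate on `Ω`, so that `Γ_τ = {T = τ}`. By the inverse function
theorem `T` is `C²` (`contDiffAt_leftInverse`), and `∇T = n / det dΦ` (`gradient_time`), hence
`φ = 1 / |∇T|` and `N = φ ∇T`. Since `N` has unit length, its divergence is its tangential trace
(`dvg_unit`), i.e. `div N = -m H`. Expanding `div (φ ∇T)` by the product rule gives
`∂φ/∂s + m H φ = -ΔT / |∇T|²` (`sq_mul_lap_eq`).

A function `U` that is constant on each `Γ_τ` has the form `f ∘ T`, and
`Δ(f ∘ T) = f''(T) |∇T|² + f'(T) ΔT` (`lap_comp`). If `U` is harmonic without critical points, then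
`f' ≠ 0` and `∂φ/∂s + m H φ = f''(T) / f'(T)` depends on `T` only. Conversely, if
`∂φ/∂s + m H φ = g(T)`, then `g` is continuous and a solution of `f'' = g f'` with `f' > 0`, namely
a primitive of `exp ∘ A` with `A' = g`, gives the harmonic function `f ∘ T`; `f` is strictly
increasing, so the level sets of `f ∘ T` are those of `T`.
-/

open scoped InnerProductSpace

/-- `∂Φ/∂x_j`, the coordinate tangent vectors of the hypersurfaces `Γ_t : x ↦ Φ(x, t)`. -/
noncomputable def Pd {m : ℕ} (Φ : EuclideanSpace ℝ (Fin m) × ℝ → EuclideanSpace ℝ (Fin (m + 1)))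
    (q : EuclideanSpace ℝ (Fin m) × ℝ) (j : Fin m) : EuclideanSpace ℝ (Fin (m + 1)) :=
  fderiv ℝ Φ q (EuclideanSpace.single j 1, 0)

/-- `∂Φ/∂t`. -/
noncomputable def Pt {m : ℕ} (Φ : EuclideanSpace ℝ (Fin m) × ℝ → EuclideanSpace ℝ (Fin (m + 1)))
    (q : EuclideanSpace ℝ (Fin m) × ℝ) : EuclideanSpace ℝ (Fin (m + 1)) :=
  fderiv ℝ Φ q (0, 1)

/-- The determinant of the square matrix whose first `m` columns are the coordinate
tangent vectors `∂Φ/∂x_j` and whose last column is `w`.  With `w = ∂Φ/∂t` this is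
`det dΦ`; as a function of `w` it is `⟪n, w⟫` for the Hodge-dual normal `n` of
`(∂Φ/∂x₁) ∧ ⋯ ∧ (∂Φ/∂x_m)`. -/
noncomputable def detWith {m : ℕ}
    (Φ : EuclideanSpace ℝ (Fin m) × ℝ → EuclideanSpace ℝ (Fin (m + 1)))
    (q : EuclideanSpace ℝ (Fin m) × ℝ) (w : EuclideanSpace ℝ (Fin (m + 1))) : ℝ :=
  Matrix.det (Matrix.of fun i j : Fin (m + 1) =>
    (Fin.snoc (fun j' : Fin m => Pd Φ q j') w :
      Fin (m + 1) → EuclideanSpace ℝ (Fin (m + 1))) j i)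

/-- `det dΦ`, the Jacobian determinant of `Φ`. -/
noncomputable def detJn {m : ℕ}
    (Φ : EuclideanSpace ℝ (Fin m) × ℝ → EuclideanSpace ℝ (Fin (m + 1)))
    (q : EuclideanSpace ℝ (Fin m) × ℝ) : ℝ :=
  detWith Φ q (Pt Φ q)

/-! ### Divergence, Laplacian and mean curvature of level sets -/

section Calculus

variable {n : ℕ}

/-- The divergence of a vector field `X` at `p`, as the trace of its derivative. -/
noncomputable def dvg (X : EuclideanSpace ℝ (Fin n) → EuclideanSpace ℝ (Fin n))
    (p : EuclideanSpace ℝ (Fin n)) : ℝ :=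
  LinearMap.trace ℝ (EuclideanSpace ℝ (Fin n))
    (fderiv ℝ X p : EuclideanSpace ℝ (Fin n) →ₗ[ℝ] EuclideanSpace ℝ (Fin n))

lemma dvg_eq_sum (X : EuclideanSpace ℝ (Fin n) → EuclideanSpace ℝ (Fin n))
    (p : EuclideanSpace ℝ (Fin n)) {ι : Type*} [Fintype ι]
    (b : OrthonormalBasis ι ℝ (EuclideanSpace ℝ (Fin n))) :
    dvg X p = ∑ i, ⟪fderiv ℝ X p (b i), b i⟫_ℝ := by
  unfold dvg
  rw [LinearMap.trace_eq_sum_inner _ b]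
  exact Finset.sum_congr rfl fun i _ => real_inner_comm _ _

lemma lap_eq_dvg (f : EuclideanSpace ℝ (Fin n) → ℝ) (p : EuclideanSpace ℝ (Fin n)) :
    lap f p = dvg (gradient f) p := by
  rw [dvg_eq_sum _ _ (EuclideanSpace.basisFun (Fin n) ℝ)]
  simp [lap]

/-- The product rule `div (h X) = h div X + ⟨∇h, X⟩`. -/
lemma dvg_smul {h : EuclideanSpace ℝ (Fin n) → ℝ}
    {X : EuclideanSpace ℝ (Fin n) → EuclideanSpace ℝ (Fin n)}
    {p v : EuclideanSpace ℝ (Fin n)} (hh : HasGradientAt h v p) (hX : DifferentiableAt ℝ X p) :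
    dvg (fun y => h y • X y) p = h p * dvg X p + ⟪v, X p⟫_ℝ := by
  set b := EuclideanSpace.basisFun (Fin n) ℝ
  rw [dvg_eq_sum _ _ b, dvg_eq_sum _ _ b, fderiv_fun_smul hh.differentiableAt hX,
    ← b.sum_inner_mul_inner v (X p), Finset.mul_sum, ← Finset.sum_add_distrib]
  refine Finset.sum_congr rfl fun i _ => ?_
  simp only [add_apply, smul_apply,
    ContinuousLinearMap.smulRight_apply, inner_add_left, real_inner_smul_left,
    hh.fderiv_apply]
  rw [real_inner_comm (X p) (b i)]

lemma dvg_congr {X Y : EuclideanSpace ℝ (Fin n) → EuclideanSpace ℝ (Fin n)}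
    {p : EuclideanSpace ℝ (Fin n)} (h : X =ᶠ[nhds p] Y) : dvg X p = dvg Y p := by
  unfold dvg
  rw [h.fderiv_eq]

lemma lap_congr {f g : EuclideanSpace ℝ (Fin n) → ℝ}
    {p : EuclideanSpace ℝ (Fin n)} (h : f =ᶠ[nhds p] g) : lap f p = lap g p := by
  rw [lap_eq_dvg, lap_eq_dvg]
  refine dvg_congr ?_
  filter_upwards [h.eventuallyEq_nhds] with y hy
  unfold gradient
  rw [hy.fderiv_eq]

lemma hasGradientAt_comp {T : EuclideanSpace ℝ (Fin n) → ℝ} {f : ℝ → ℝ} {f' : ℝ}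
    {p v : EuclideanSpace ℝ (Fin n)} (hT : HasGradientAt T v p)
    (hf : HasDerivAt f f' (T p)) : HasGradientAt (fun y => f (T y)) (f' • v) p := by
  rw [hasGradientAt_iff_hasFDerivAt] at hT ⊢
  have := hf.comp_hasFDerivAt p hT
  convert! this using 1
  simp

lemma contDiffAt_gradient {T : EuclideanSpace ℝ (Fin n) → ℝ} {p : EuclideanSpace ℝ (Fin n)}
    (hT : ContDiffAt ℝ 2 T p) : ContDiffAt ℝ 1 (gradient T) p :=
  (InnerProductSpace.toDual ℝ (EuclideanSpace ℝ (Fin n))).symm.toContinuousLinearEquiv.contDiff.contDiffAt.comp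
    p (hT.fderiv_right (m := 1) (by norm_num))

/-- `Δ(f ∘ T) = f''(T) |∇T|² + f'(T) ΔT`. -/
lemma lap_comp {T : EuclideanSpace ℝ (Fin n) → ℝ} {p : EuclideanSpace ℝ (Fin n)}
    (hT : ContDiffAt ℝ 2 T p) {f f' : ℝ → ℝ} {f'' : ℝ}
    (hf : ∀ᶠ s in nhds (T p), HasDerivAt f (f' s) s) (hf' : HasDerivAt f' f'' (T p)) :
    lap (fun y => f (T y)) p = f'' * ‖gradient T p‖ ^ 2 + f' (T p) * lap T p := by
  have hTd : ∀ᶠ y in nhds p, DifferentiableAt ℝ T y :=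
    (hT.eventually (by simp)).mono fun y hy => hy.differentiableAt (by norm_num)
  have h1 : gradient (fun y => f (T y)) =ᶠ[nhds p] fun y => f' (T y) • gradient T y := by
    filter_upwards [hTd, hT.continuousAt.eventually hf] with y hy hfy
    exact (hasGradientAt_comp hy.hasGradientAt hfy).gradient
  have h2 := hasGradientAt_comp hTd.self_of_nhds.hasGradientAt hf'
  rw [lap_eq_dvg, dvg_congr h1, dvg_smul h2
    ((contDiffAt_gradient hT).differentiableAt (by norm_num)), lap_eq_dvg,
    real_inner_smul_left, real_inner_self_eq_norm_sq]
  ring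

/-- If `N` is a field of unit vectors, `div N` is the trace of `dN` over the hyperplane `(N p)ᗮ`
(computed in some orthonormal basis `b` of it), because `⟨dN(N), N⟩ = 0`. -/
lemma dvg_unit {m : ℕ} {N : EuclideanSpace ℝ (Fin (m + 1)) → EuclideanSpace ℝ (Fin (m + 1))}
    {p : EuclideanSpace ℝ (Fin (m + 1))} (hN : DifferentiableAt ℝ N p)
    (h1 : ∀ᶠ y in nhds p, ‖N y‖ = 1) :
    ∃ b : Fin m → EuclideanSpace ℝ (Fin (m + 1)), Orthonormal ℝ b ∧
      (∀ i, ⟪b i, N p⟫_ℝ = 0) ∧ dvg N p = ∑ i, ⟪fderiv ℝ N p (b i), b i⟫_ℝ := by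
  have hon : Orthonormal ℝ (Set.domRestrict {Fin.last m} (fun _ : Fin (m + 1) => N p)) := by
    refine ⟨fun i => h1.self_of_nhds, fun i j hij => ?_⟩
    exact absurd (Subsingleton.elim i j) hij
  obtain ⟨b, hb⟩ := hon.exists_orthonormalBasis_extension_of_card_eq (by simp)
  have hbl : b (Fin.last m) = N p := hb _ rfl
  refine ⟨fun i => b i.castSucc, b.orthonormal.comp _ (Fin.castSucc_injective m), fun i => ?_, ?_⟩
  · rw [← hbl]
    exact b.orthonormal.2 (Fin.castSucc_lt_last i).ne
  · have hc : (fun y => ⟪N y, N y⟫_ℝ) =ᶠ[nhds p] fun _ => (1 : ℝ) := by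
      filter_upwards [h1] with y hy
      rw [real_inner_self_eq_norm_sq, hy]; norm_num
    have hd := fderiv_inner_apply ℝ hN hN (N p)
    rw [hc.fderiv_eq, real_inner_comm] at hd
    rw [dvg_eq_sum _ _ b, Fin.sum_univ_castSucc, hbl]
    simp only [fderiv_fun_const, Pi.zero_apply, zero_apply] at hd
    linarith

/-- Taking the divergence of `N = φ ∇T` gives `-m H = φ ΔT + ⟨∇φ, ∇T⟩`, and
`⟨∇φ, ∇T⟩ = φ⁻¹ ∂φ/∂s`. -/
lemma sq_mul_lap_eq {m : ℕ} (hm : 1 ≤ m) {Ω : Set (EuclideanSpace ℝ (Fin (m + 1)))}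
    (hΩ : IsOpen Ω) {T φ H dφds : EuclideanSpace ℝ (Fin (m + 1)) → ℝ}
    {N : EuclideanSpace ℝ (Fin (m + 1)) → EuclideanSpace ℝ (Fin (m + 1))}
    (hT : ∀ p ∈ Ω, ContDiffAt ℝ 2 T p) (hT0 : ∀ p ∈ Ω, gradient T p ≠ 0)
    (hφ : ∀ p ∈ Ω, φ p = ‖gradient T p‖⁻¹) (hN : ∀ p ∈ Ω, N p = φ p • gradient T p)
    (hH : ∀ p ∈ Ω, ∀ b : Fin m → EuclideanSpace ℝ (Fin (m + 1)),
      Orthonormal ℝ b → (∀ i, ⟪b i, N p⟫_ℝ = 0) →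
      H p = -(∑ i, ⟪fderiv ℝ N p (b i), b i⟫_ℝ) / m)
    (hdφds : ∀ p ∈ Ω, ∀ α : ℝ → EuclideanSpace ℝ (Fin (m + 1)), α 0 = p →
      (∀ᶠ s in nhds 0, α s ∈ Ω ∧ HasDerivAt α (N (α s)) s) →
      HasDerivAt (fun s => φ (α s)) (dφds p) 0)
    {p : EuclideanSpace ℝ (Fin (m + 1))} (hp : p ∈ Ω) :
    dφds p + m * H p * φ p = -(φ p ^ 2 * lap T p) := by
  have hΩp : ∀ᶠ y in nhds p, y ∈ Ω := hΩ.mem_nhds hp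
  have hg1 := contDiffAt_gradient (hT p hp)
  have hφC : ContDiffAt ℝ 1 φ p := by
    refine ((hg1.norm ℝ (hT0 p hp)).inv (norm_ne_zero_iff.2 (hT0 p hp))).congr_of_eventuallyEq ?_
    filter_upwards [hΩp] with y hy using hφ y hy
  have hNe : N =ᶠ[nhds p] fun y => φ y • gradient T y := by
    filter_upwards [hΩp] with y hy using hN y hy
  have hNC : ContDiffAt ℝ 1 N p := (hφC.smul hg1).congr_of_eventuallyEq hNe
  have hNu : ∀ᶠ y in nhds p, ‖N y‖ = 1 := by
    filter_upwards [hΩp] with y hy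
    have := norm_ne_zero_iff.2 (hT0 y hy)
    rw [hN y hy, hφ y hy, norm_smul, norm_inv, norm_norm, inv_mul_cancel₀ this]
  have hφd := (hφC.differentiableAt (by norm_num)).hasGradientAt
  have hφ0 : φ p ≠ 0 := by
    rw [hφ p hp]; exact inv_ne_zero (norm_ne_zero_iff.2 (hT0 p hp))
  -- `∂φ/∂s` is pinned down by one integral curve of `N`, which exists because `N` is `C¹`.
  have hds : dφds p = ⟪gradient φ p, N p⟫_ℝ := by
    obtain ⟨α, hα0, δ, hδ, hα⟩ :=
      hNC.exists_forall_mem_closedBall_exists_eq_forall_mem_Ioo_hasDerivAt₀ 0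
    have hα' : ∀ᶠ s in nhds (0 : ℝ), HasDerivAt α (N (α s)) s := by
      filter_upwards [Ioo_mem_nhds (show 0 - δ < 0 by linarith) (show 0 < 0 + δ by linarith)]
        with s hs using hα s hs
    have hαd := hα'.self_of_nhds
    have hαΩ : ∀ᶠ s in nhds (0 : ℝ), α s ∈ Ω :=
      hαd.continuousAt.eventually (by rw [hα0]; exact hΩp)
    have h1 := hdφds p hp α hα0 (hαΩ.and hα')
    rw [← hα0, hasGradientAt_iff_hasFDerivAt] at hφd
    have h2 := hφd.comp_hasDerivAt 0 hαd
    have h3 := h1.unique h2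
    rw [h3, hα0]
    simp
  obtain ⟨b, hb, hbN, hdiv⟩ := dvg_unit (hNC.differentiableAt (by norm_num)) hNu
  have hHp := hH p hp b hb hbN
  rw [← hdiv, dvg_congr hNe, dvg_smul hφd (hg1.differentiableAt (by norm_num)),
    ← lap_eq_dvg] at hHp
  rw [hds, hHp, hN p hp, real_inner_smul_right]
  have hm0 : (m : ℝ) ≠ 0 := by positivity
  field_simp
  ring

/-- A continuous function on an open interval has a primitive there. -/
lemma exists_primitive {a b : ℝ} {g : ℝ → ℝ} (hg : ContinuousOn g (Set.Ioo a b)) :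
    ∃ G : ℝ → ℝ, ∀ t ∈ Set.Ioo a b, HasDerivAt G (g t) t := by
  by_cases hab : a < b
  · obtain ⟨c, hc⟩ := exists_between hab
    refine ⟨fun u => ∫ x in c..u, g x, fun t ht => ?_⟩
    refine intervalIntegral.integral_hasDerivAt_right ?_
      (hg.stronglyMeasurableAtFilter isOpen_Ioo t ht) (hg.continuousAt (isOpen_Ioo.mem_nhds ht))
    exact (hg.mono (Set.ordConnected_Ioo.uIcc_subset hc ht)).intervalIntegrable
  · exact ⟨0, fun t ht => absurd (ht.1.trans ht.2) hab⟩

lemma contDiffOn_two {I : Set ℝ} (hI : IsOpen I) {f f' f'' : ℝ → ℝ}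
    (hf : ∀ t ∈ I, HasDerivAt f (f' t) t) (hf' : ∀ t ∈ I, HasDerivAt f' (f'' t) t)
    (hf'' : ContinuousOn f'' I) : ContDiffOn ℝ 2 f I := by
  have h1 : ContDiffOn ℝ 1 f' I := by
    rw [show (1 : WithTop ℕ∞) = 0 + 1 from rfl, contDiffOn_succ_iff_deriv_of_isOpen hI]
    refine ⟨fun t ht => (hf' t ht).differentiableAt.differentiableWithinAt, by simp, ?_⟩
    exact contDiffOn_zero.2 (hf''.congr fun t ht => (hf' t ht).deriv)
  rw [show (2 : WithTop ℕ∞) = 1 + 1 by norm_num, contDiffOn_succ_iff_deriv_of_isOpen hI]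
  exact ⟨fun t ht => (hf t ht).differentiableAt.differentiableWithinAt, by simp,
    h1.congr fun t ht => (hf t ht).deriv⟩

end Calculus


/-! ### The time coordinate of the parametrization -/

section Coordinates

variable {m : ℕ} {Φ : EuclideanSpace ℝ (Fin m) × ℝ → EuclideanSpace ℝ (Fin (m + 1))}
  {q : EuclideanSpace ℝ (Fin m) × ℝ}

lemma fderiv_eq_sum (x : EuclideanSpace ℝ (Fin m)) (s : ℝ) :
    fderiv ℝ Φ q (x, s) = ∑ j, x j • Pd Φ q j + s • Pt Φ q := by
  have hx : (x, s) = ∑ j, x j • ((EuclideanSpace.single j (1 : ℝ) : EuclideanSpace ℝ (Fin m)),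
      (0 : ℝ)) + s • ((0 : EuclideanSpace ℝ (Fin m)), (1 : ℝ)) := by
    have h := (EuclideanSpace.basisFun (Fin m) ℝ).sum_repr x
    simp only [EuclideanSpace.basisFun_apply, EuclideanSpace.basisFun_repr] at h
    refine Prod.ext ?_ ?_
    · simp [Prod.fst_sum, h]
    · simp [Prod.snd_sum]
  rw [hx, map_add, map_sum]
  simp only [map_smul]
  rfl

lemma detWith_Pd (j : Fin m) : detWith Φ q (Pd Φ q j) = 0 := by
  unfold detWith
  refine Matrix.det_zero_of_column_eq (Fin.castSucc_lt_last j).ne fun i => ?_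
  simp

lemma fderiv_injective (h : detJn Φ q ≠ 0) : Function.Injective (fderiv ℝ Φ q) := by
  refine (injective_iff_map_eq_zero _).2 fun ⟨x, s⟩ hxs => ?_
  rw [fderiv_eq_sum] at hxs
  have hv := Matrix.eq_zero_of_mulVec_eq_zero (v := (Fin.snoc x.ofLp s : Fin (m + 1) → ℝ)) h (by
    funext i
    have := congrArg (fun w : EuclideanSpace ℝ (Fin (m + 1)) => w i) hxs
    simp only [Matrix.mulVec, dotProduct, Fin.sum_univ_castSucc, Matrix.of_apply,
      Fin.snoc_castSucc, Fin.snoc_last, Pi.zero_apply]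
    simpa [mul_comm] using this)
  have hs : s = 0 := by simpa using congrFun hv (Fin.last m)
  have hx : x = 0 := by
    ext j
    simpa using congrFun hv j.castSucc
  rw [hs, hx]; rfl

/-- The derivative of `Φ` as a linear isomorphism, where its Jacobian determinant is nonzero. -/
noncomputable def fderivEquiv (h : detJn Φ q ≠ 0) :
    (EuclideanSpace ℝ (Fin m) × ℝ) ≃L[ℝ] EuclideanSpace ℝ (Fin (m + 1)) :=
  (LinearMap.linearEquivOfInjective
    (fderiv ℝ Φ q : (EuclideanSpace ℝ (Fin m) × ℝ) →ₗ[ℝ] EuclideanSpace ℝ (Fin (m + 1)))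
    (fderiv_injective h) (by simp)).toContinuousLinearEquiv

lemma coe_fderivEquiv (h : detJn Φ q ≠ 0) :
    (fderivEquiv h : (EuclideanSpace ℝ (Fin m) × ℝ) →L[ℝ] EuclideanSpace ℝ (Fin (m + 1))) =
      fderiv ℝ Φ q :=
  ContinuousLinearMap.ext fun _ => rfl

/-- A left inverse of `Φ` near `q` is `C²` at `Φ q`, by the inverse function theorem. -/
lemma contDiffAt_leftInverse (hΦ : ContDiffAt ℝ 2 Φ q) (h : detJn Φ q ≠ 0)
    {Ψ : EuclideanSpace ℝ (Fin (m + 1)) → EuclideanSpace ℝ (Fin m) × ℝ}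
    (hΨ : ∀ᶠ y in nhds q, Ψ (Φ y) = y) : ContDiffAt ℝ 2 Ψ (Φ q) := by
  have hf : HasFDerivAt Φ
      (fderivEquiv h : (EuclideanSpace ℝ (Fin m) × ℝ) →L[ℝ] EuclideanSpace ℝ (Fin (m + 1))) q := by
    rw [coe_fderivEquiv]
    exact (hΦ.differentiableAt (by norm_num)).hasFDerivAt
  exact (hΦ.to_localInverse hf (by norm_num)).congr_of_eventuallyEq
    ((hΦ.hasStrictFDerivAt' hf (by norm_num)).localInverse_unique hΨ)

/-- The time coordinate `T = t ∘ Φ⁻¹` has gradient `n / det dΦ`: both pair to `0` with the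
`∂Φ/∂x_j` and to `1` with `∂Φ/∂t`. -/
lemma gradient_time (hΦ : DifferentiableAt ℝ Φ q) (h : detJn Φ q ≠ 0)
    {T : EuclideanSpace ℝ (Fin (m + 1)) → ℝ} (hT : DifferentiableAt ℝ T (Φ q))
    (hTΦ : ∀ᶠ y in nhds q, T (Φ y) = y.2) {v : EuclideanSpace ℝ (Fin (m + 1))}
    (hv : ∀ w, ⟪v, w⟫_ℝ = detWith Φ q w) :
    gradient T (Φ q) = (detJn Φ q)⁻¹ • v := by
  refine ext_inner_right ℝ fun w => ?_
  obtain ⟨⟨x, s⟩, rfl⟩ : ∃ y, fderiv ℝ Φ q y = w :=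
    ⟨(fderivEquiv h).symm w, (fderivEquiv h).apply_symm_apply w⟩
  have h1 : HasFDerivAt (fun y => T (Φ y)) _ q := hT.hasFDerivAt.comp q hΦ.hasFDerivAt
  have h2 : HasFDerivAt (fun y => T (Φ y))
      (ContinuousLinearMap.snd ℝ (EuclideanSpace ℝ (Fin m)) ℝ) q :=
    (hasFDerivAt_snd (p := q)).congr_of_eventuallyEq hTΦ
  have h3 : fderiv ℝ T (Φ q) (fderiv ℝ Φ q (x, s)) = s :=
    congrArg (fun L : (EuclideanSpace ℝ (Fin m) × ℝ) →L[ℝ] ℝ => L (x, s)) (h1.unique h2)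
  have h4 : ∑ j, ⟪v, x j • Pd Φ q j⟫_ℝ = 0 :=
    Finset.sum_eq_zero fun j _ => by rw [real_inner_smul_right, hv, detWith_Pd, mul_zero]
  rw [inner_gradient_left, h3, real_inner_smul_left, fderiv_eq_sum, inner_add_right, inner_sum, h4,
    real_inner_smul_right, hv, zero_add]
  change s = (detJn Φ q)⁻¹ * (s * detJn Φ q)
  field_simp

end Coordinates

/-! ### Harmonic functions with prescribed level sets -/

theorem stmt12 (m : ℕ) (hm : 1 ≤ m) (ε : ℝ) (hε : 0 < ε)
    (S : Set (EuclideanSpace ℝ (Fin m) × ℝ)) (hS : S = Set.univ ×ˢ Set.Ioo (-ε) ε)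
    (Φ : EuclideanSpace ℝ (Fin m) × ℝ → EuclideanSpace ℝ (Fin (m + 1)))
    (hΦ : ContDiffOn ℝ 2 Φ S) (hinj : Set.InjOn Φ S)
    (Ω : Set (EuclideanSpace ℝ (Fin (m + 1)))) (hΩ : Ω = Φ '' S) (hΩopen : IsOpen Ω)
    (hdet : ∀ q ∈ S, 0 < detJn Φ q)
    -- nv is the Hodge dual of (∂Φ/∂x₁) ∧ ⋯ ∧ (∂Φ/∂x_m)
    (nv : EuclideanSpace ℝ (Fin m) × ℝ → EuclideanSpace ℝ (Fin (m + 1)))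
    (hnv : ∀ q ∈ S, ∀ w, ⟪nv q, w⟫_ℝ = detWith Φ q w)
    -- N = n/‖n‖ as a unit normal field on Ω
    (N : EuclideanSpace ℝ (Fin (m + 1)) → EuclideanSpace ℝ (Fin (m + 1)))
    (hN : ∀ q ∈ S, N (Φ q) = ‖nv q‖⁻¹ • nv q)
    -- φ = det dΦ/‖n‖ as a function on Ω
    (φ : EuclideanSpace ℝ (Fin (m + 1)) → ℝ)
    (hφ : ∀ q ∈ S, φ (Φ q) = detJn Φ q / ‖nv q‖)
    -- H is the mean curvature of the Γ_t with respect to N: minus the averaged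
    -- tangential trace of the derivative of the unit normal field N
    (H : EuclideanSpace ℝ (Fin (m + 1)) → ℝ)
    (hH : ∀ p ∈ Ω, ∀ b : Fin m → EuclideanSpace ℝ (Fin (m + 1)),
      Orthonormal ℝ b → (∀ i, ⟪b i, N p⟫_ℝ = 0) →
      H p = -(∑ i, ⟪fderiv ℝ N p (b i), b i⟫_ℝ) / m)
    -- ∂φ/∂s is the derivative of φ along unit-speed integral curves of N
    (dφds : EuclideanSpace ℝ (Fin (m + 1)) → ℝ)
    (hdφds : ∀ p ∈ Ω, ∀ α : ℝ → EuclideanSpace ℝ (Fin (m + 1)), α 0 = p →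
      (∀ᶠ s in nhds 0, α s ∈ Ω ∧ HasDerivAt α (N (α s)) s) →
      HasDerivAt (fun s => φ (α s)) (dφds p) 0) :
    (∃ U : EuclideanSpace ℝ (Fin (m + 1)) → ℝ,
      ContDiffOn ℝ 2 U Ω ∧
      (∀ p ∈ Ω, gradient U p ≠ 0) ∧
      (∀ p ∈ Ω, lap U p = 0) ∧
      -- each Γ_t is a level set of U, and every level set of U is some Γ_t
      (∀ τ ∈ Set.Ioo (-ε) ε, ∃ c : ℝ,
        {p ∈ Ω | U p = c} = (fun x => Φ (x, τ)) '' Set.univ) ∧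
      (∀ c : ℝ, {p ∈ Ω | U p = c}.Nonempty → ∃ τ ∈ Set.Ioo (-ε) ε,
        {p ∈ Ω | U p = c} = (fun x => Φ (x, τ)) '' Set.univ)) ↔
    (∀ τ ∈ Set.Ioo (-ε) ε, ∀ x₁ x₂ : EuclideanSpace ℝ (Fin m),
      dφds (Φ (x₁, τ)) + m * H (Φ (x₁, τ)) * φ (Φ (x₁, τ)) =
        dφds (Φ (x₂, τ)) + m * H (Φ (x₂, τ)) * φ (Φ (x₂, τ))) := by
  have hIo : IsOpen (Set.Ioo (-ε) ε) := isOpen_Ioo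
  have hSo : IsOpen S := by rw [hS]; exact isOpen_univ.prod hIo
  have hmS : ∀ x τ, τ ∈ Set.Ioo (-ε) ε → (x, τ) ∈ S := fun x τ h => by rw [hS]; exact ⟨trivial, h⟩
  have hS2 : ∀ q ∈ S, q.2 ∈ Set.Ioo (-ε) ε := fun q hq => by rw [hS] at hq; exact hq.2
  have hΦΩ : ∀ q ∈ S, Φ q ∈ Ω := fun q hq => by rw [hΩ]; exact ⟨q, hq, rfl⟩
  have hΦC : ∀ q ∈ S, ContDiffAt ℝ 2 Φ q := fun q hq => hΦ.contDiffAt (hSo.mem_nhds hq)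
  set Ψ := Function.invFunOn Φ S
  have hΨ : ∀ q ∈ S, Ψ (Φ q) = q := fun q hq => hinj.leftInvOn_invFunOn hq
  -- The time coordinate on `Ω`: `Γ_τ` is the level set `T = τ`.
  set T : EuclideanSpace ℝ (Fin (m + 1)) → ℝ := fun p => (Ψ p).2
  have hTΦ : ∀ q ∈ S, T (Φ q) = q.2 := fun q hq => congrArg Prod.snd (hΨ q hq)
  have hTI : ∀ p ∈ Ω, T p ∈ Set.Ioo (-ε) ε := by
    rw [hΩ]; rintro _ ⟨q, hq, rfl⟩; rw [hTΦ q hq]; exact hS2 q hq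
  have hTC : ∀ p ∈ Ω, ContDiffAt ℝ 2 T p := by
    rw [hΩ]; rintro _ ⟨q, hq, rfl⟩
    exact (contDiffAt_leftInverse (hΦC q hq) (hdet q hq).ne'
      ((hSo.eventually_mem hq).mono hΨ)).snd
  have hgrad : ∀ q ∈ S, gradient T (Φ q) = (detJn Φ q)⁻¹ • nv q := fun q hq =>
    gradient_time ((hΦC q hq).differentiableAt (by norm_num)) (hdet q hq).ne'
      ((hTC _ (hΦΩ q hq)).differentiableAt (by norm_num))
      ((hSo.eventually_mem hq).mono hTΦ) (hnv q hq)
  have hnv0 : ∀ q ∈ S, nv q ≠ 0 := fun q hq h0 => by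
    have h1 := hnv q hq (Pt Φ q)
    rw [h0, inner_zero_left] at h1
    exact (hdet q hq).ne h1
  have hT0 : ∀ p ∈ Ω, gradient T p ≠ 0 := by
    rw [hΩ]; rintro _ ⟨q, hq, rfl⟩; rw [hgrad q hq]
    exact smul_ne_zero (inv_ne_zero (hdet q hq).ne') (hnv0 q hq)
  have hφT : ∀ p ∈ Ω, φ p = ‖gradient T p‖⁻¹ := by
    rw [hΩ]; rintro _ ⟨q, hq, rfl⟩
    rw [hφ q hq, hgrad q hq, norm_smul, norm_inv, Real.norm_of_nonneg (hdet q hq).le, mul_inv,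
      inv_inv, div_eq_mul_inv]
  have hNT : ∀ p ∈ Ω, N p = φ p • gradient T p := by
    rw [hΩ]; rintro _ ⟨q, hq, rfl⟩
    have h1 := (hdet q hq).ne'
    rw [hN q hq, hφ q hq, hgrad q hq, smul_smul]
    congr 1
    field_simp
  have key : ∀ p ∈ Ω, dφds p + m * H p * φ p = -((‖gradient T p‖⁻¹) ^ 2 * lap T p) :=
    fun p hp => by
      rw [sq_mul_lap_eq hm hΩopen hTC hT0 hφT hNT hH hdφds hp, hφT p hp]
  have hγ : ContDiffOn ℝ 2 (fun τ : ℝ => Φ (0, τ)) (Set.Ioo (-ε) ε) :=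
    hΦ.comp (by fun_prop) fun τ hτ => hmS 0 τ hτ
  constructor
  · rintro ⟨U, hUC, hU0, hUlap, hUlev, -⟩
    -- `U` is constant on each `Γ_τ`, hence `U = f ∘ T` for its profile `f` along `τ ↦ Φ(0, τ)`.
    set f : ℝ → ℝ := fun τ => U (Φ (0, τ))
    have hfC : ContDiffOn ℝ 2 f (Set.Ioo (-ε) ε) :=
      hUC.comp hγ fun τ hτ => hΦΩ _ (hmS 0 τ hτ)
    have hfC' : ContDiffOn ℝ 1 (deriv f) (Set.Ioo (-ε) ε) :=
      hfC.deriv_of_isOpen hIo (by norm_num)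
    have hf1 : ∀ t ∈ Set.Ioo (-ε) ε, HasDerivAt f (deriv f t) t := fun t ht =>
      ((hfC.contDiffAt (hIo.mem_nhds ht)).differentiableAt (by norm_num)).hasDerivAt
    have hf2 : ∀ t ∈ Set.Ioo (-ε) ε, HasDerivAt (deriv f) (deriv (deriv f) t) t := fun t ht =>
      ((hfC'.contDiffAt (hIo.mem_nhds ht)).differentiableAt (by norm_num)).hasDerivAt
    have hUf : ∀ p ∈ Ω, U p = f (T p) := by
      intro p hp
      rw [hΩ] at hp
      obtain ⟨⟨x, τ⟩, hq, rfl⟩ := hp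
      obtain ⟨c, hc⟩ := hUlev τ (hS2 _ hq)
      have h1 : Φ (x, τ) ∈ {p ∈ Ω | U p = c} := by rw [hc]; exact ⟨x, trivial, rfl⟩
      have h2 : Φ (0, τ) ∈ {p ∈ Ω | U p = c} := by rw [hc]; exact ⟨0, trivial, rfl⟩
      rw [hTΦ _ hq, h1.2]
      exact h2.2.symm
    -- `0 = ΔU = f''(T) |∇T|² + f'(T) ΔT`, and `f'(T) ≠ 0` because `∇U = f'(T) ∇T`.
    have main : ∀ q ∈ S, dφds (Φ q) + m * H (Φ q) * φ (Φ q) =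
        deriv (deriv f) q.2 / deriv f q.2 := by
      intro q hq
      have hp := hΦΩ q hq
      have hUe : U =ᶠ[nhds (Φ q)] fun y => f (T y) :=
        (hΩopen.eventually_mem hp).mono hUf
      have hIT := hTI _ hp
      have hgU : gradient U (Φ q) = deriv f (T (Φ q)) • gradient T (Φ q) := by
        refine HasGradientAt.gradient (HasGradientAt.congr_of_eventuallyEq ?_ hUe)
        exact hasGradientAt_comp ((hTC _ hp).differentiableAt (by norm_num)).hasGradientAt
          (hf1 _ hIT)
      have hf0 : deriv f (T (Φ q)) ≠ 0 := fun h0 => hU0 _ hp (by rw [hgU, h0, zero_smul])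
      have hl := hUlap _ hp
      rw [lap_congr hUe, lap_comp (hTC _ hp) ((hIo.eventually_mem hIT).mono hf1) (hf2 _ hIT)] at hl
      have hg0 := norm_ne_zero_iff.2 (hT0 _ hp)
      rw [key _ hp, ← hTΦ q hq]
      field_simp
      linarith
    intro τ hτ x₁ x₂
    rw [main _ (hmS x₁ τ hτ), main _ (hmS x₂ τ hτ)]
  · intro hconst
    set g : ℝ → ℝ := fun τ => dφds (Φ (0, τ)) + m * H (Φ (0, τ)) * φ (Φ (0, τ))
    have hgC : ContinuousOn g (Set.Ioo (-ε) ε) := by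
      refine ContinuousOn.congr (f := fun τ =>
        -((‖gradient T (Φ (0, τ))‖⁻¹) ^ 2 * lap T (Φ (0, τ)))) ?_
        fun τ hτ => key _ (hΦΩ _ (hmS 0 τ hτ))
      intro τ hτ
      have hp := hΦΩ _ (hmS 0 τ hτ)
      have h1 := contDiffAt_gradient (hTC _ hp)
      have h2 : ContinuousAt (fun p => -((‖gradient T p‖⁻¹) ^ 2 * lap T p)) (Φ (0, τ)) := by
        refine (((h1.continuousAt.norm.inv₀ (norm_ne_zero_iff.2 (hT0 _ hp))).pow 2).mul ?_).neg
        refine tendsto_finsetSum _ fun i _ => ?_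
        exact ((h1.fderiv_right (m := 0) (by norm_num)).continuousAt.clm_apply
          continuousAt_const).inner continuousAt_const
      exact ContinuousAt.comp_continuousWithinAt (f := fun τ : ℝ => Φ (0, τ)) h2
        (hγ.continuousOn τ hτ)
    -- Solve the ODE `F'' = g F'` with `F' > 0` and take `U = F ∘ T`.
    obtain ⟨A, hA⟩ := exists_primitive hgC
    have hE : ∀ t ∈ Set.Ioo (-ε) ε,
        HasDerivAt (fun t => Real.exp (A t)) (Real.exp (A t) * g t) t := fun t ht => (hA t ht).exp
    obtain ⟨F, hF⟩ := exists_primitive (fun t ht => (hE t ht).continuousAt.continuousWithinAt :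
      ContinuousOn (fun t => Real.exp (A t)) (Set.Ioo (-ε) ε))
    have hFC : ContDiffOn ℝ 2 F (Set.Ioo (-ε) ε) := contDiffOn_two hIo hF hE
      (ContinuousOn.mul (fun t ht => (hE t ht).continuousAt.continuousWithinAt) hgC)
    have hFinj : Set.InjOn F (Set.Ioo (-ε) ε) := by
      refine (strictMonoOn_of_deriv_pos (convex_Ioo _ _)
        (fun t ht => (hF t ht).continuousAt.continuousWithinAt) fun t ht => ?_).injOn
      rw [interior_Ioo] at ht
      rw [(hF t ht).deriv]
      exact Real.exp_pos _
    have hlev : ∀ τ ∈ Set.Ioo (-ε) ε,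
        {p ∈ Ω | F (T p) = F τ} = (fun x => Φ (x, τ)) '' Set.univ := by
      intro τ hτ
      ext p
      constructor
      · rintro ⟨hp, hpF⟩
        have hpτ := hFinj (hTI p hp) hτ hpF
        rw [hΩ] at hp
        obtain ⟨⟨x, σ⟩, hq, rfl⟩ := hp
        rw [hTΦ _ hq] at hpτ
        exact ⟨x, trivial, by rw [← hpτ]⟩
      · rintro ⟨x, -, rfl⟩
        exact ⟨hΦΩ _ (hmS x τ hτ), by rw [hTΦ _ (hmS x τ hτ)]⟩
    refine ⟨fun p => F (T p), fun p hp => ?_, fun p hp => ?_, fun p hp => ?_,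
      fun τ hτ => ⟨F τ, hlev τ hτ⟩, ?_⟩
    · exact ((hFC.contDiffAt (hIo.mem_nhds (hTI p hp))).comp p (hTC p hp)).contDiffWithinAt
    · rw [(hasGradientAt_comp ((hTC p hp).differentiableAt (by norm_num)).hasGradientAt
        (hF _ (hTI p hp))).gradient]
      exact smul_ne_zero (Real.exp_ne_zero _) (hT0 p hp)
    · rw [lap_comp (hTC p hp) ((hIo.eventually_mem (hTI p hp)).mono hF) (hE _ (hTI p hp))]
      have hgp : g (T p) = -((‖gradient T p‖⁻¹) ^ 2 * lap T p) := by
        rw [← key p hp]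
        rw [hΩ] at hp
        obtain ⟨⟨x, τ⟩, hq, rfl⟩ := hp
        rw [hTΦ _ hq]
        exact hconst τ (hS2 _ hq) 0 x
      have hg0 := norm_ne_zero_iff.2 (hT0 _ hp)
      rw [hgp]
      field_simp
      ring
    · rintro c ⟨p, hp, rfl⟩
      exact ⟨T p, hTI p hp, hlev _ (hTI p hp)⟩
end
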